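/- Let 1 ≤ i₁, i₂ ≤ n²/2 and j₁, j₂ ∈ {0,1}. If 2i₁−1 ≥ n²−2i₂+1 and i₁ ≤ i₂, then S_{2i₁,j₁}⊗S_{2i₂,j₂} ≅ ⊕_{l=0}^{n²−2i₂} S_{n²+2i₁−2i₂−2l, \overline{j₁+j₂+l}} and, symmetrically, if 2i₁−1 ≥ n²−2i₂+1 and i₁ > i₂, then S_{2i₁,j₁}⊗S_{2i₂,j₂} ≅ ⊕_{l=0}^{n²−2i₁} S_{n²−2i₁+2i₂−2l, \overline{j₁+j₂+l}}. -/

import Mathlib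

noncomputable section

open scoped TensorProduct

namespace QFL

/-- The defining relations of the quasi-Frobenius-Lusztig kernel `ũ_q(sl₂)`,
on the free algebra on four generators `K = ι 0`, `K̂ = ι 1`, `E = ι 2`, `F = ι 3`. -/
inductive Rel (k : Type) [Field k] (n : ℕ) (q : k) :
    FreeAlgebra k (Fin 4) → FreeAlgebra k (Fin 4) → Prop
  | Kord : Rel k n q (FreeAlgebra.ι k (0 : Fin 4) ^ n) 1
  | Khord : Rel k n q (FreeAlgebra.ι k (1 : Fin 4) ^ n)
      ((FreeAlgebra.ι k (0 : Fin 4) ^ (n - 1)) ^ 2)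
  | KKh : Rel k n q (FreeAlgebra.ι k (0 : Fin 4) * FreeAlgebra.ι k (1 : Fin 4))
      (FreeAlgebra.ι k (1 : Fin 4) * FreeAlgebra.ι k (0 : Fin 4))
  | KE : Rel k n q
      (FreeAlgebra.ι k (0 : Fin 4) * FreeAlgebra.ι k (2 : Fin 4) *
        FreeAlgebra.ι k (0 : Fin 4) ^ (n - 1))
      (q ^ n • FreeAlgebra.ι k (2 : Fin 4))
  | KF : Rel k n q
      (FreeAlgebra.ι k (0 : Fin 4) * FreeAlgebra.ι k (3 : Fin 4) *
        FreeAlgebra.ι k (0 : Fin 4) ^ (n - 1))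
      ((q ^ n)⁻¹ • FreeAlgebra.ι k (3 : Fin 4))
  | KhE : Rel k n q
      (FreeAlgebra.ι k (1 : Fin 4) * FreeAlgebra.ι k (2 : Fin 4) *
        FreeAlgebra.ι k (1 : Fin 4) ^ (n ^ 2 - 1))
      ((q ^ n * (q ^ 2)⁻¹) • FreeAlgebra.ι k (2 : Fin 4))
  | KhF : Rel k n q
      (FreeAlgebra.ι k (1 : Fin 4) * FreeAlgebra.ι k (3 : Fin 4) *
        FreeAlgebra.ι k (1 : Fin 4) ^ (n ^ 2 - 1))
      (((q ^ n)⁻¹ * q ^ 2) • FreeAlgebra.ι k (3 : Fin 4))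
  | Enil : Rel k n q (FreeAlgebra.ι k (2 : Fin 4) ^ n ^ 2) 0
  | Fnil : Rel k n q (FreeAlgebra.ι k (3 : Fin 4) ^ n ^ 2) 0
  | EF : Rel k n q
      (FreeAlgebra.ι k (3 : Fin 4) * FreeAlgebra.ι k (2 : Fin 4) -
        q⁻¹ • (FreeAlgebra.ι k (2 : Fin 4) * FreeAlgebra.ι k (3 : Fin 4)))
      (1 - FreeAlgebra.ι k (0 : Fin 4) ^ (n - 1) * FreeAlgebra.ι k (1 : Fin 4))

/-- The algebra `ũ_q(sl₂)` as the quotient of the free algebra by the defining relations. -/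
abbrev U (k : Type) [Field k] (n : ℕ) (q : k) := RingQuot (Rel k n q)

variable (k : Type) [Field k] (n : ℕ) (q : k)

def K : U k n q := RingQuot.mkAlgHom k (Rel k n q) (FreeAlgebra.ι k (0 : Fin 4))
def Kh : U k n q := RingQuot.mkAlgHom k (Rel k n q) (FreeAlgebra.ι k (1 : Fin 4))
def E : U k n q := RingQuot.mkAlgHom k (Rel k n q) (FreeAlgebra.ι k (2 : Fin 4))
def F : U k n q := RingQuot.mkAlgHom k (Rel k n q) (FreeAlgebra.ι k (3 : Fin 4))

/-- `K⁻¹ = K^(n-1)`. -/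
def Kinv : U k n q := K k n q ^ (n - 1)
/-- `K̂⁻¹ = K̂^(n²-1)`. -/
def Khinv : U k n q := Kh k n q ^ (n ^ 2 - 1)

/-- `φ_{2i} = (2/n²) Σ_{t<n²/2} q^{-2it} (K⁻¹K̂)^t`. -/
def phi (i : ℕ) : U k n q :=
  ((n ^ 2 : k)⁻¹ * 2) • ∑ t ∈ Finset.range (n ^ 2 / 2),
    (q⁻¹ ^ (2 * i * t)) • (Kinv k n q * Kh k n q) ^ t

/-- `𝟙₀ = (1/2)(1 + KK̂^(n/2))` and `𝟙₁ = (1/2)(1 - KK̂^(n/2))`. -/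
def oneJ (j : ℕ) : U k n q :=
  if j = 0 then (2 : k)⁻¹ • (1 + K k n q * Kh k n q ^ (n / 2))
  else (2 : k)⁻¹ • (1 - K k n q * Kh k n q ^ (n / 2))

/-- The idempotent `e_{2i,j} = φ_{2i} 𝟙_j`. -/
def eIdem (i j : ℕ) : U k n q := phi k n q i * oneJ k n q j

/-- `α_{2i,j} = F^(n²-1) e_{2i,j}`. -/
def alpha (i j : ℕ) : U k n q := F k n q ^ (n ^ 2 - 1) * eIdem k n q i j

/-- `β_{2i,j} = E^(2i-2) α_{2i,j}`. -/
def beta (i j : ℕ) : U k n q := E k n q ^ (2 * i - 2) * alpha k n q i j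

/-- The Gaussian number `s_q = 1 + q + ⋯ + q^(s-1)`. -/
def gauss (x : k) (s : ℕ) : k := ∑ t ∈ Finset.range s, x ^ t

/-- The span of the PBW-type monomials `F^a K^c K̂^d E^b` with `a ≤ n²-2`, `b ≤ n²-1`,
`c ≤ n-1`, `d ≤ n²-1`. -/
def pbw : Submodule k (U k n q) :=
  Submodule.span k {x | ∃ a b c d : ℕ, a ≤ n ^ 2 - 2 ∧ b ≤ n ^ 2 - 1 ∧ c ≤ n - 1 ∧
    d ≤ n ^ 2 - 1 ∧ x = F k n q ^ a * K k n q ^ c * Kh k n q ^ d * E k n q ^ b}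

/-- `γ_{2i,j}`: the unique element of the PBW span with `F·γ = β_{2i,j}`. -/
def gam (i j : ℕ) : U k n q :=
  @dite _ (∃! x, x ∈ pbw k n q ∧ F k n q * x = beta k n q i j)
    (Classical.propDecidable _) (fun h => h.choose) (fun _ => 0)

/-- The left ideal `P_{2i,j} = u·γ_{2i,j}`. -/
def P (i j : ℕ) : Submodule (U k n q) (U k n q) :=
  Submodule.span (U k n q) {gam k n q i j}

/-- `S_{2i,j} = Soc(P_{2i,j})`, the sum of all simple submodules of `P_{2i,j}`. -/
def S (i j : ℕ) : Submodule (U k n q) (U k n q) :=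
  sSup {N : Submodule (U k n q) (U k n q) | N ≤ P k n q i j ∧ IsSimpleModule (U k n q) N}

end QFL

namespace QFL

variable (k : Type) [Field k] (n : ℕ) (q : k)

/-- `1_r = (1/n) Σ_{t<n} q̄^{(n-r)t} K^t`. -/
def oneIdem (r : ℕ) : U k n q :=
  (n : k)⁻¹ • ∑ t ∈ Finset.range n, ((q ^ n) ^ ((n - r) * t)) • K k n q ^ t

/-- `♭ = Σ_{r<n} q^{-r} 1_r` (an invertible element of `u`). -/
def flat : U k n q := ∑ r ∈ Finset.range n, (q⁻¹ ^ r) • oneIdem k n q r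

/-- The property that `Δ` is the comultiplication of `ũ_q(sl₂)` (which exists and is the
unique algebra map with these values on the generators). -/
def IsComul (Δ : U k n q →ₐ[k] (U k n q ⊗[k] U k n q)) : Prop :=
  Δ (K k n q) = K k n q ⊗ₜ[k] K k n q ∧
  Δ (Kh k n q) = Kh k n q ⊗ₜ[k] Kh k n q ∧
  Δ (E k n q) = (E k n q ⊗ₜ[k] Ring.inverse (flat k n q)) +
    (Kinv k n q ⊗ₜ[k] (oneIdem k n q 0 * E k n q)) +
    ((1 : U k n q) ⊗ₜ[k] ((∑ r ∈ Finset.Icc 1 (n - 1), oneIdem k n q r) * E k n q)) ∧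
  Δ (F k n q) = (F k n q ⊗ₜ[k] flat k n q) +
    ((Kinv k n q * Kh k n q) ⊗ₜ[k]
      (F k n q * ∑ r ∈ Finset.Icc 1 (n - 1), oneIdem k n q r)) +
    (Kh k n q ⊗ₜ[k] (F k n q * oneIdem k n q 0))

instance (N : Submodule (U k n q) (U k n q)) : SMulCommClass (U k n q) k N := by
  constructor
  intro a b m
  ext
  show a • b • (m : U k n q) = b • a • (m : U k n q)
  rw [smul_comm]

/-- The `u`-module structure on `M ⊗[k] N` obtained from left `u`-modules `M`, `N` by letting
`u` act through the comultiplication `Δ`. -/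
def tensorModule (Δ : U k n q →ₐ[k] (U k n q ⊗[k] U k n q))
    (M N : Type) [AddCommGroup M] [Module k M] [Module (U k n q) M]
    [IsScalarTower k (U k n q) M] [SMulCommClass (U k n q) k M]
    [AddCommGroup N] [Module k N] [Module (U k n q) N]
    [IsScalarTower k (U k n q) N] [SMulCommClass (U k n q) k N] :
    Module (U k n q) (M ⊗[k] N) :=
  Module.compHom (M ⊗[k] N)
    ((Module.endTensorEndAlgHom (R := k) (S := k) (A := k) (M := M) (N := N)).comp
      ((Algebra.TensorProduct.map (Algebra.lsmul k k M) (Algebra.lsmul k k N)).comp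
        Δ)).toRingHom

end QFL

/-!
The elements `K⁻¹K̂` and `KK̂^(n/2)` generate all group-like elements; applying `E` multiplies the
eigenvalue of the first by `q⁻²` and that of the second by `-1`. A vector `v` killed by `F` on which
they act by `q^(d-1)` and `(-1)^j` satisfies `F E^s v ∈ k · E^(s-1) v`, with a coefficient which
for `0 < s < n²` vanishes only at `s = d`. If moreover `E^d v = 0`, the string `v, …, E^(d-1) v`
spans a simple module determined by `(d, j)`. The socle `S_{2i,j}` is of this form, with
`d = n² - 2i + 1`: it is generated by `E^(2i-1) α_{2i,j}`, the vector at which the string of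
`α_{2i,j}`, of length `n²`, breaks. That `α_{2i,j}` and its string do not vanish is seen in the
modules induced from characters of the group-like elements, where `F^a E^b` form a basis.

On a tensor product of weight vectors, `Δ(E)` and `Δ(F)` act by the Leibniz rule up to scalars,
which for `F` are nonzero. Let two strings have lengths `d₁` and `d₂` with `d₁ + d₂ ≤ n²`, which
is the hypothesis `2i₁ - 1 ≥ n² - 2i₂ + 1`. Solving `F w = 0` one coefficient at a time gives a
nonzero solution `w_m` of degree `m` for each `m < min(d₁, d₂)`, and only the zero solution in
degrees at least `d₁`. Since `F` kills `E^d w_m` for `d = d₁ + d₂ - 1 - 2m`, it follows that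
`E^d w_m = 0`, so `w_m` is the image of the lowest vector of a simple module of dimension `d`.
The sum of these maps is injective, because `F` is nilpotent and the `w_m` are linearly independent,
having distinct weights; and `Σ_m (d₁ + d₂ - 1 - 2m) = d₁d₂`.
-/

namespace QFL

/-! ### Skew commutation -/

section SkewCommutation

variable {k : Type} [Field k]

theorem gauss_zero (x : k) : gauss k x 0 = 0 := by simp [gauss]

theorem gauss_succ (x : k) (s : ℕ) : gauss k x (s + 1) = gauss k x s + x ^ s :=
  Finset.sum_range_succ _ _

theorem gauss_succ' (x : k) (s : ℕ) : gauss k x (s + 1) = x * gauss k x s + 1 :=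
  geom_sum_succ

theorem gauss_eq_zero {x : k} {N : ℕ} (hN : 1 < N) (hx : IsPrimitiveRoot x N) :
    gauss k x N = 0 := hx.geom_sum_eq_zero hN

theorem gauss_ne_zero {x : k} {N s : ℕ} (hx : IsPrimitiveRoot x N) (hs : s ≠ 0) (hsN : s < N) :
    gauss k x s ≠ 0 := fun h ↦
  hx.pow_ne_one_of_pos_of_lt hs hsN <| sub_eq_zero.mp <| by
    rw [← geom_sum_mul, show ∑ t ∈ Finset.range s, x ^ t = 0 from h, zero_mul]

variable {A : Type*} [Ring A] [Algebra k A] {c : k} {x y : A}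

theorem mul_pow_of_skew (h : x * y = c • (y * x)) (s : ℕ) : x * y ^ s = c ^ s • (y ^ s * x) := by
  have hxy : SemiconjBy x y (c • y) := by rw [SemiconjBy, h, smul_mul_assoc]
  simpa [SemiconjBy, smul_pow] using hxy.pow_right s

theorem pow_mul_of_skew (h : x * y = c • (y * x)) (s : ℕ) : x ^ s * y = c ^ s • (y * x ^ s) := by
  induction s with
  | zero => simp
  | succ s ih =>
    rw [pow_succ', mul_assoc, ih, mul_smul_comm, ← mul_assoc, h, smul_mul_assoc, smul_smul,
      pow_succ, mul_assoc]

theorem mul_pow_succ_of_skew_add {m : k} {g : A} (h : x * y = c • (y * x) + m • (1 - g))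
    (hg : g * y = c ^ 2 • (y * g)) (s : ℕ) :
    x * y ^ (s + 1) = c ^ (s + 1) • (y ^ (s + 1) * x) +
      (m * gauss k c (s + 1)) • (y ^ s - c ^ s • (y ^ s * g)) := by
  induction s with
  | zero => simp [gauss_succ, gauss_zero, h]
  | succ s ih =>
    have step : x * y ^ (s + 2) =
        c • (y * (x * y ^ (s + 1))) + m • (y ^ (s + 1) - g * y ^ (s + 1)) := by
      rw [pow_succ' y (s + 1), ← mul_assoc, h]
      simp only [add_mul, sub_mul, smul_mul_assoc, one_mul, mul_assoc]
    rw [step, ih, mul_pow_of_skew hg]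
    simp only [mul_add, mul_sub, mul_smul_comm, ← mul_assoc, ← pow_succ']
    linear_combination (norm := module) (-m * gauss_succ' c (s + 1)) • y ^ (s + 1) +
      (m * c ^ (s + 1) * gauss_succ c (s + 1)) • (y ^ (s + 1) * g)

end SkewCommutation

/-! ### The group-like elements -/

section Relations

/-- The group-like element `K⁻¹K̂`, whose eigenvalues are the weights of a module. -/
def weightElt (k : Type) [Field k] (n : ℕ) (q : k) : U k n q := Kinv k n q * Kh k n q

/-- The involution `KK̂^(n/2)`, whose eigenvalue `(-1)^j` distinguishes `𝟙₀` from `𝟙₁`. -/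
def signElt (k : Type) [Field k] (n : ℕ) (q : k) : U k n q := K k n q * Kh k n q ^ (n / 2)

/-- The standing assumptions on the parameters: `q` is a primitive `n²`-th root of unity and
`n` is a positive multiple of `4`. -/
structure Admissible {k : Type} [Field k] (n : ℕ) (q : k) : Prop where
  pos : 0 < n
  four_dvd : 4 ∣ n
  primitive : IsPrimitiveRoot q (n ^ 2)

variable {k : Type} [Field k] {n : ℕ} {q : k}

namespace Admissible

variable (h : Admissible n q)
include h

theorem ne_zero : q ≠ 0 := h.primitive.ne_zero (pow_pos h.pos 2).ne'

theorem primitive_inv : IsPrimitiveRoot q⁻¹ (n ^ 2) := h.primitive.inv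

theorem four_le : 4 ≤ n := Nat.le_of_dvd h.pos h.four_dvd

theorem two_le_sq : 2 ≤ n ^ 2 := by nlinarith [h.four_le]

theorem two_dvd : 2 ∣ n := Dvd.dvd.trans (by norm_num) h.four_dvd

theorem two_dvd_sq : 2 ∣ n ^ 2 := h.two_dvd.trans (dvd_pow_self n two_ne_zero)

theorem half_sq : n ^ 2 / 2 = n * (n / 2) := by
  rw [sq, Nat.mul_div_assoc _ h.two_dvd]

theorem pow_half : q ^ (n ^ 2 / 2) = -1 :=
  (h.primitive.pow (pow_pos h.pos 2)
    (Nat.div_mul_cancel h.two_dvd_sq).symm).eq_neg_one_of_two_right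

theorem primitive_pow : IsPrimitiveRoot (q ^ n) n :=
  h.primitive.pow (pow_pos h.pos 2) (sq n)

theorem primitive_sq : IsPrimitiveRoot (q ^ 2) (n ^ 2 / 2) :=
  h.primitive.pow (pow_pos h.pos 2) (Nat.mul_div_cancel' h.two_dvd_sq).symm

theorem natCast_ne_zero : (n : k) ≠ 0 := fun hn ↦ by
  have : NeZero (n ^ 2) := ⟨(pow_pos h.pos 2).ne'⟩
  exact (h.primitive.neZero').out (by rw [Nat.cast_pow, hn, zero_pow two_ne_zero])

theorem two_ne_zero : (2 : k) ≠ 0 := fun h2 ↦ by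
  obtain ⟨m, hm⟩ := h.four_dvd
  exact h.natCast_ne_zero (by rw [hm]; push_cast; linear_combination (2 * (m : k)) * h2)

end Admissible

theorem mkAlgHom_eq_of_rel {x y : FreeAlgebra k (Fin 4)} (h : Rel k n q x y) :
    RingQuot.mkAlgHom k (Rel k n q) x = RingQuot.mkAlgHom k (Rel k n q) y :=
  RingQuot.mkAlgHom_rel k h

theorem K_pow_n : K k n q ^ n = 1 := by
  simpa only [map_pow, map_one, K] using mkAlgHom_eq_of_rel (.Kord (n := n) (q := q))

theorem Kh_pow_n : Kh k n q ^ n = (K k n q ^ (n - 1)) ^ 2 := by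
  simpa only [map_pow, K, Kh] using mkAlgHom_eq_of_rel (.Khord (n := n) (q := q))

theorem commute_K_Kh : Commute (K k n q) (Kh k n q) := by
  simpa only [map_mul, Commute, SemiconjBy, K, Kh] using mkAlgHom_eq_of_rel (.KKh (n := n) (q := q))

theorem E_pow_sq : E k n q ^ n ^ 2 = 0 := by
  simpa only [map_pow, map_zero, E] using mkAlgHom_eq_of_rel (.Enil (n := n) (q := q))

theorem F_pow_sq : F k n q ^ n ^ 2 = 0 := by
  simpa only [map_pow, map_zero, F] using mkAlgHom_eq_of_rel (.Fnil (n := n) (q := q))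

theorem F_mul_E : F k n q * E k n q =
    q⁻¹ • (E k n q * F k n q) + (1 : k) • (1 - weightElt k n q) := by
  have := mkAlgHom_eq_of_rel (.EF (n := n) (q := q))
  simp only [map_mul, map_pow, map_smul, map_sub, map_one] at this
  rw [one_smul, add_comm, ← sub_eq_iff_eq_add]
  exact this

theorem E_mul_F (hq : q ≠ 0) : E k n q * F k n q =
    q • (F k n q * E k n q) + (-q) • (1 - weightElt k n q) := by
  rw [F_mul_E, smul_add, smul_smul, mul_inv_cancel₀ hq]
  module

theorem Kinv_mul_K (hn : 0 < n) : Kinv k n q * K k n q = 1 := by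
  rw [Kinv, ← pow_succ, Nat.sub_add_cancel hn, K_pow_n]

theorem Kh_pow_sq : Kh k n q ^ n ^ 2 = 1 := by
  rw [sq, pow_mul, Kh_pow_n, ← pow_mul, ← pow_mul,
    show (n - 1) * (2 * n) = n * ((n - 1) * 2) by ring, pow_mul, K_pow_n, one_pow]

theorem Khinv_mul_Kh (hn : 0 < n) : Khinv k n q * Kh k n q = 1 := by
  rw [Khinv, ← pow_succ, Nat.sub_add_cancel (Nat.pow_pos hn), Kh_pow_sq]

theorem mul_eq_smul_of_conj {A : Type*} [Ring A] [Algebra k A] {u u' x : A} {c : k}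
    (hu : u' * u = 1) (h : u * x * u' = c • x) : u * x = c • (x * u) := by
  rw [← smul_mul_assoc, ← h, mul_assoc _ u' u, hu, mul_one]

theorem K_mul_E (hn : 0 < n) : K k n q * E k n q = q ^ n • (E k n q * K k n q) :=
  mul_eq_smul_of_conj (Kinv_mul_K hn) <| by
    simpa only [map_mul, map_pow, map_smul, Kinv, K, E] using
      mkAlgHom_eq_of_rel (.KE (n := n) (q := q))

theorem K_mul_F (hn : 0 < n) : K k n q * F k n q = (q ^ n)⁻¹ • (F k n q * K k n q) :=
  mul_eq_smul_of_conj (Kinv_mul_K hn) <| by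
    simpa only [map_mul, map_pow, map_smul, Kinv, K, F] using
      mkAlgHom_eq_of_rel (.KF (n := n) (q := q))

theorem Kh_mul_E (hn : 0 < n) :
    Kh k n q * E k n q = (q ^ n * (q ^ 2)⁻¹) • (E k n q * Kh k n q) :=
  mul_eq_smul_of_conj (Khinv_mul_Kh hn) <| by
    simpa only [map_mul, map_pow, map_smul, Khinv, Kh, E] using
      mkAlgHom_eq_of_rel (.KhE (n := n) (q := q))

theorem Kh_mul_F (hn : 0 < n) :
    Kh k n q * F k n q = ((q ^ n)⁻¹ * q ^ 2) • (F k n q * Kh k n q) :=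
  mul_eq_smul_of_conj (Khinv_mul_Kh hn) <| by
    simpa only [map_mul, map_pow, map_smul, Khinv, Kh, F] using
      mkAlgHom_eq_of_rel (.KhF (n := n) (q := q))

theorem weightElt_mul_of_skew {x : U k n q} {a b : k} (hn : 0 < n) (ha : a ^ n = 1)
    (hK : K k n q * x = a • (x * K k n q)) (hKh : Kh k n q * x = (a * b) • (x * Kh k n q)) :
    weightElt k n q * x = b • (x * weightElt k n q) := by
  rw [weightElt, Kinv, mul_assoc, hKh, mul_smul_comm, ← mul_assoc, pow_mul_of_skew hK,
    smul_mul_assoc, smul_smul, mul_right_comm, ← pow_succ', Nat.sub_add_cancel hn, ha,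
    one_mul, mul_assoc]

theorem signElt_mul_of_skew {x : U k n q} {a b : k}
    (hK : K k n q * x = a • (x * K k n q)) (hKh : Kh k n q * x = b • (x * Kh k n q)) :
    signElt k n q * x = (a * b ^ (n / 2)) • (x * signElt k n q) := by
  rw [signElt, mul_assoc, pow_mul_of_skew hKh, mul_smul_comm, ← mul_assoc, hK, smul_mul_assoc,
    smul_smul, mul_assoc, mul_comm a]

theorem commute_K_weightElt : Commute (K k n q) (weightElt k n q) :=
  ((Commute.refl _).pow_right _).mul_right commute_K_Kh

theorem commute_K_signElt : Commute (K k n q) (signElt k n q) :=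
  (Commute.refl _).mul_right (commute_K_Kh.pow_right _)

theorem commute_Kh_signElt : Commute (Kh k n q) (signElt k n q) :=
  commute_K_Kh.symm.mul_right ((Commute.refl _).pow_right _)

theorem commute_weightElt_signElt : Commute (weightElt k n q) (signElt k n q) :=
  (commute_K_signElt.pow_left _).mul_left commute_Kh_signElt

theorem K_mul_weightElt (hn : 0 < n) : K k n q * weightElt k n q = Kh k n q := by
  rw [weightElt, Kinv, ← mul_assoc, ← pow_succ', Nat.sub_add_cancel hn, K_pow_n, one_mul]

theorem weightElt_pow_n_mul (hn : 0 < n) (s : ℕ) :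
    weightElt k n q ^ (n * s) = Kh k n q ^ (n * s) := by
  rw [← K_mul_weightElt hn, commute_K_weightElt.mul_pow, pow_mul (K k n q), K_pow_n, one_pow,
    one_mul]

namespace Admissible

variable (h : Admissible n q)
include h

theorem weightElt_mul_E : weightElt k n q * E k n q = q⁻¹ ^ 2 • (E k n q * weightElt k n q) :=
  weightElt_mul_of_skew h.pos h.primitive_pow.pow_eq_one (K_mul_E h.pos)
    (by rw [inv_pow]; exact Kh_mul_E h.pos)

theorem weightElt_mul_F : weightElt k n q * F k n q = q ^ 2 • (F k n q * weightElt k n q) :=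
  weightElt_mul_of_skew h.pos h.primitive_pow.inv.pow_eq_one (K_mul_F h.pos) (Kh_mul_F h.pos)

theorem signElt_mul_E : signElt k n q * E k n q = (-1 : k) • (E k n q * signElt k n q) := by
  have hc : q ^ n * (q ^ n * (q ^ 2)⁻¹) ^ (n / 2) = -1 := by
    rw [mul_pow, ← pow_mul, ← h.half_sq, h.pow_half, inv_pow, ← pow_mul,
      Nat.mul_div_cancel' h.two_dvd]
    field_simp [h.ne_zero]
  rw [signElt_mul_of_skew (K_mul_E h.pos) (Kh_mul_E h.pos), hc]

theorem signElt_mul_F : signElt k n q * F k n q = (-1 : k) • (F k n q * signElt k n q) := by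
  have hc : (q ^ n)⁻¹ * ((q ^ n)⁻¹ * q ^ 2) ^ (n / 2) = -1 := by
    rw [mul_pow, inv_pow, ← pow_mul, ← h.half_sq, h.pow_half, ← pow_mul,
      Nat.mul_div_cancel' h.two_dvd]
    field_simp [h.ne_zero]
  rw [signElt_mul_of_skew (K_mul_F h.pos) (Kh_mul_F h.pos), hc]

theorem weightElt_pow_half : weightElt k n q ^ (n ^ 2 / 2) = 1 := by
  rw [h.half_sq, weightElt_pow_n_mul h.pos, pow_mul, Kh_pow_n, ← pow_mul, ← pow_mul,
    Nat.mul_div_cancel' h.two_dvd, mul_comm, pow_mul, K_pow_n, one_pow]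

theorem signElt_mul_self : signElt k n q * signElt k n q = 1 := by
  have hpos := h.pos
  rw [← sq, signElt, (commute_K_Kh.pow_right _).mul_pow, ← pow_mul, Nat.div_mul_cancel h.two_dvd,
    Kh_pow_n, ← pow_mul, ← pow_add, show 2 + (n - 1) * 2 = n * 2 by lia, pow_mul, K_pow_n,
    one_pow]

theorem K_eq : K k n q = signElt k n q * weightElt k n q ^ (n ^ 2 / 4 - n / 2) := by
  obtain ⟨m, rfl⟩ := h.four_dvd
  have hpos := h.pos
  have hle : 2 * m ≤ 4 * m * m := by nlinarith
  have hexp : (4 * m) ^ 2 / 4 - 4 * m / 2 = 4 * m * m - 2 * m := by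
    rw [show (4 * m) ^ 2 = 4 * m * m * 4 by ring]; omega
  have hK : K k (4 * m) q ^ (2 * m) * ((K k (4 * m) q ^ (4 * m - 1)) ^ 2) ^ m = 1 := by
    rw [← pow_mul, ← pow_mul, ← pow_add, add_comm, ← Nat.succ_mul,
      Nat.succ_eq_add_one, Nat.sub_add_cancel hpos, pow_mul, K_pow_n, one_pow]
  rw [hexp, signElt, show 4 * m / 2 = 2 * m by omega, ← K_mul_weightElt h.pos,
    commute_K_weightElt.mul_pow, mul_assoc, mul_assoc, ← pow_add, Nat.add_sub_cancel' hle,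
    weightElt_pow_n_mul hpos, pow_mul (Kh k _ q), Kh_pow_n, hK, mul_one]

end Admissible

end Relations

/-! ### Spectral idempotents -/

section SpectralIdempotents

variable {k A : Type*} [Field k] [Ring A] [Algebra k A]

/-- The projection onto the `ζ ^ i`-eigenspace of an element `g` with `g ^ m = 1`, where `ζ` is a
primitive `m`-th root of unity. The elements `φ_{2i}`, `𝟙_j` and `1_r` are all of this form. -/
def spectralIdem (ζ : k) (m : ℕ) (g : A) (i : ℕ) : A :=
  (m : k)⁻¹ • ∑ t ∈ Finset.range m, (ζ⁻¹ ^ i • g) ^ t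

variable {ζ : k} {m : ℕ} {g : A}

theorem mul_spectralIdem (hm : m ≠ 0) (hζ : ζ ^ m = 1) (hg : g ^ m = 1) (i : ℕ) :
    g * spectralIdem ζ m g i = ζ ^ i • spectralIdem ζ m g i := by
  have hζ0 : ζ ≠ 0 := fun h ↦ by simp [h, hm] at hζ
  have fixed := mul_geom_sum (ζ⁻¹ ^ i • g) m
  rw [smul_pow, hg, ← pow_mul, mul_comm i, pow_mul, inv_pow ζ m, hζ, inv_one, one_pow, one_smul,
    sub_self, sub_mul, one_mul, sub_eq_zero, smul_mul_assoc] at fixed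
  rw [spectralIdem, mul_smul_comm, smul_comm]
  congr 1
  conv_rhs => rw [← fixed]
  rw [smul_smul, ← mul_pow, mul_inv_cancel₀ hζ0, one_pow, one_smul]

theorem commute_spectralIdem {x : A} (h : Commute x g) (i : ℕ) :
    Commute x (spectralIdem ζ m g i) :=
  (Commute.sum_right _ _ _ fun t _ ↦ (h.smul_right _).pow_right t).smul_right _

theorem sum_spectralIdem (hζ : IsPrimitiveRoot ζ m) (hm : (m : k) ≠ 0) :
    ∑ i ∈ Finset.range m, spectralIdem ζ m g i = 1 := by
  have hm0 : m ≠ 0 := fun h ↦ hm (by simp [h])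
  have coeff : ∀ t ∈ Finset.range m, t ≠ 0 →
      ∑ i ∈ Finset.range m, (ζ⁻¹ ^ i • g) ^ t = 0 := fun t ht ht0 ↦ by
    have ht1 : ζ⁻¹ ^ t - 1 ≠ 0 := sub_ne_zero.mpr <|
      hζ.inv.pow_ne_one_of_pos_of_lt ht0 (Finset.mem_range.mp ht)
    have hsum : ∑ i ∈ Finset.range m, (ζ⁻¹ ^ t) ^ i = 0 := by
      refine (mul_eq_zero.mp ?_).resolve_right ht1
      rw [geom_sum_mul, ← pow_mul, mul_comm, pow_mul, hζ.inv.pow_eq_one, one_pow, sub_self]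
    simp only [smul_pow, ← pow_mul, mul_comm _ t]
    simp only [pow_mul, ← Finset.sum_smul, hsum, zero_smul]
  simp only [spectralIdem]
  rw [← Finset.smul_sum, Finset.sum_comm, Finset.sum_eq_single_of_mem 0
    (Finset.mem_range.mpr (Nat.pos_of_ne_zero hm0)) coeff]
  simp only [pow_zero, Finset.sum_const, Finset.card_range]
  rw [← Nat.cast_smul_eq_nsmul k, smul_smul, inv_mul_cancel₀ hm, one_smul]

variable {X : Type*} [AddCommGroup X] [Module k X] [Module A X] [IsScalarTower k A X]

theorem pow_smul_of_smul {l : k} {v : X} (hv : g • v = l • v) (s : ℕ) : g ^ s • v = l ^ s • v := by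
  induction s with
  | zero => simp
  | succ s ih => rw [pow_succ, mul_smul, hv, smul_comm, ih, smul_smul, pow_succ']

theorem spectralIdem_smul {l : k} {v : X} (hv : g • v = l • v) (i : ℕ) :
    spectralIdem ζ m g i • v = ((m : k)⁻¹ * ∑ t ∈ Finset.range m, (ζ⁻¹ ^ i * l) ^ t) • v := by
  simp only [spectralIdem, smul_assoc, Finset.sum_smul, smul_pow, pow_smul_of_smul hv, smul_smul,
    mul_pow, Finset.smul_sum, Finset.mul_sum, mul_assoc]

theorem spectralIdem_smul_self (hζ : ζ ≠ 0) (hm : (m : k) ≠ 0) {i : ℕ} {v : X}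
    (hv : g • v = ζ ^ i • v) : spectralIdem ζ m g i • v = v := by
  rw [spectralIdem_smul hv, ← mul_pow, inv_mul_cancel₀ hζ]
  simp [hm]

theorem spectralIdem_smul_of_ne (hζ : IsPrimitiveRoot ζ m) {i r : ℕ} (hi : i < m) (hr : r < m)
    (hir : i ≠ r) {v : X} (hv : g • v = ζ ^ r • v) : spectralIdem ζ m g i • v = 0 := by
  have hζ0 : ζ ≠ 0 := hζ.ne_zero (by lia)
  have hne : ζ⁻¹ ^ i * ζ ^ r - 1 ≠ 0 := fun h ↦ hir <| hζ.pow_inj hi hr <| by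
    rw [sub_eq_zero, inv_pow, inv_mul_eq_one₀ (pow_ne_zero i hζ0)] at h
    exact h
  have hsum : ∑ t ∈ Finset.range m, (ζ⁻¹ ^ i * ζ ^ r) ^ t = 0 := by
    refine (mul_eq_zero.mp ?_).resolve_right hne
    rw [geom_sum_mul, mul_pow, ← pow_mul, ← pow_mul, mul_comm i, mul_comm r, pow_mul, pow_mul,
      hζ.pow_eq_one, hζ.inv.pow_eq_one, one_pow, one_pow, mul_one, sub_self]
  rw [spectralIdem_smul hv, hsum, mul_zero, zero_smul]

end SpectralIdempotents

section Generators

variable {k : Type} [Field k] {n : ℕ} {q : k}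

theorem adjoin_generators :
    Algebra.adjoin k {K k n q, Kh k n q, E k n q, F k n q} = ⊤ := by
  have hrange : ({K k n q, Kh k n q, E k n q, F k n q} : Set (U k n q)) =
      RingQuot.mkAlgHom k (Rel k n q) '' Set.range (FreeAlgebra.ι k) := by
    ext x
    simp [K, Kh, E, F, Fin.exists_fin_succ, eq_comm]
  rw [hrange, ← AlgHom.map_adjoin, FreeAlgebra.adjoin_range_ι, Algebra.map_top,
    AlgHom.range_eq_top]
  exact RingQuot.mkAlgHom_surjective k _

variable {X Y : Type*} [AddCommGroup X] [Module k X] [Module (U k n q) X]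
  [IsScalarTower k (U k n q) X] [AddCommGroup Y] [Module k Y] [Module (U k n q) Y]
  [IsScalarTower k (U k n q) Y]

theorem smul_mem_of_generators {W : Submodule k X} (hK : ∀ x ∈ W, K k n q • x ∈ W)
    (hKh : ∀ x ∈ W, Kh k n q • x ∈ W) (hE : ∀ x ∈ W, E k n q • x ∈ W)
    (hF : ∀ x ∈ W, F k n q • x ∈ W) (u : U k n q) : ∀ x ∈ W, u • x ∈ W := by
  have hu : u ∈ Algebra.adjoin k {K k n q, Kh k n q, E k n q, F k n q} := by
    rw [adjoin_generators]; exact Algebra.mem_top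
  induction hu using Algebra.adjoin_induction with
  | mem u hu => rcases hu with rfl | rfl | rfl | rfl <;> assumption
  | algebraMap c => exact fun x hx ↦ by rw [algebraMap_smul]; exact W.smul_mem c hx
  | add u u' _ _ hu hu' =>
    exact fun x hx ↦ by rw [add_smul]; exact W.add_mem (hu x hx) (hu' x hx)
  | mul u u' _ _ hu hu' => exact fun x hx ↦ by rw [mul_smul]; exact hu _ (hu' x hx)

theorem map_smul_of_generators {f : X →ₗ[k] Y} (hK : ∀ x, f (K k n q • x) = K k n q • f x)
    (hKh : ∀ x, f (Kh k n q • x) = Kh k n q • f x) (hE : ∀ x, f (E k n q • x) = E k n q • f x)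
    (hF : ∀ x, f (F k n q • x) = F k n q • f x) (u : U k n q) :
    ∀ x, f (u • x) = u • f x := by
  have hu : u ∈ Algebra.adjoin k {K k n q, Kh k n q, E k n q, F k n q} := by
    rw [adjoin_generators]; exact Algebra.mem_top
  induction hu using Algebra.adjoin_induction with
  | mem u hu => rcases hu with rfl | rfl | rfl | rfl <;> assumption
  | algebraMap c => exact fun x ↦ by rw [algebraMap_smul, algebraMap_smul, map_smul]
  | add u u' _ _ hu hu' => exact fun x ↦ by rw [add_smul, add_smul, map_add, hu, hu']
  | mul u u' _ _ hu hu' => exact fun x ↦ by rw [mul_smul, mul_smul, hu, hu']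

end Generators

/-! ### Weight spaces -/

section WeightSpaces

variable {k : Type} [Field k] {n : ℕ} {q : k}

variable (n q) in
/-- The vectors of `X` on which `K⁻¹K̂` acts by `l` and `KK̂^(n/2)` acts by `ε`. -/
def weightSpace (X : Type*) [AddCommGroup X] [Module k X] [Module (U k n q) X]
    [IsScalarTower k (U k n q) X] (l ε : k) : Submodule k X :=
  Module.End.eigenspace (Algebra.lsmul k k X (weightElt k n q)) l ⊓
    Module.End.eigenspace (Algebra.lsmul k k X (signElt k n q)) ε

variable {X : Type*} [AddCommGroup X] [Module k X] [Module (U k n q) X]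
  [IsScalarTower k (U k n q) X]

theorem mem_weightSpace {l ε : k} {v : X} : v ∈ weightSpace n q X l ε ↔
    weightElt k n q • v = l • v ∧ signElt k n q • v = ε • v := by
  simp [weightSpace]

theorem smul_mem_weightSpace_of_skew {x : U k n q} {a b l ε : k} {v : X}
    (hg : weightElt k n q * x = a • (x * weightElt k n q))
    (hz : signElt k n q * x = b • (x * signElt k n q)) (hv : v ∈ weightSpace n q X l ε) :
    x • v ∈ weightSpace n q X (a * l) (b * ε) := by
  rw [mem_weightSpace] at hv ⊢
  constructor
  · rw [← mul_smul, hg, smul_assoc, mul_smul, hv.1, smul_comm x, smul_smul]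
  · rw [← mul_smul, hz, smul_assoc, mul_smul, hv.2, smul_comm x, smul_smul]

namespace Admissible

variable (h : Admissible n q) {l ε : k} {v : X} (hv : v ∈ weightSpace n q X l ε)
include h hv

theorem E_pow_smul_mem_weightSpace (s : ℕ) :
    E k n q ^ s • v ∈ weightSpace n q X ((q⁻¹ ^ 2) ^ s * l) ((-1) ^ s * ε) :=
  smul_mem_weightSpace_of_skew (mul_pow_of_skew h.weightElt_mul_E s)
    (mul_pow_of_skew h.signElt_mul_E s) hv

theorem F_pow_smul_mem_weightSpace (s : ℕ) :
    F k n q ^ s • v ∈ weightSpace n q X ((q ^ 2) ^ s * l) ((-1) ^ s * ε) :=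
  smul_mem_weightSpace_of_skew (mul_pow_of_skew h.weightElt_mul_F s)
    (mul_pow_of_skew h.signElt_mul_F s) hv

theorem K_smul_of_mem_weightSpace : K k n q • v = (l ^ (n ^ 2 / 4 - n / 2) * ε) • v := by
  rw [mem_weightSpace] at hv
  rw [h.K_eq, mul_smul, pow_smul_of_smul hv.1, smul_comm, hv.2, smul_smul]

theorem Kh_smul_of_mem_weightSpace :
    Kh k n q • v = (l ^ (n ^ 2 / 4 - n / 2) * ε * l) • v := by
  rw [← K_mul_weightElt h.pos, mul_smul, (mem_weightSpace.mp hv).1, smul_comm,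
    h.K_smul_of_mem_weightSpace hv, smul_smul, mul_comm]

end Admissible

/-! ### The idempotents `e_{2i,j}` -/

theorem phi_eq_spectralIdem (hn : 2 ∣ n) (h2 : (2 : k) ≠ 0) (i : ℕ) :
    phi k n q i = spectralIdem (q ^ 2) (n ^ 2 / 2) (weightElt k n q) i := by
  have hcast : ((n ^ 2 / 2 : ℕ) : k)⁻¹ = (n ^ 2 : k)⁻¹ * 2 := by
    rw [Nat.cast_div (hn.trans (dvd_pow_self n two_ne_zero)) (by exact_mod_cast h2), inv_div]
    push_cast
    ring
  rw [phi, spectralIdem, hcast]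
  simp only [smul_pow, inv_pow, ← pow_mul, mul_assoc]
  rfl

theorem oneJ_eq_spectralIdem {j : ℕ} (hj : j ≤ 1) :
    oneJ k n q j = spectralIdem (-1 : k) 2 (signElt k n q) j := by
  interval_cases j
  · simp [oneJ, spectralIdem, signElt, Finset.sum_range_succ]
  · simp only [oneJ, spectralIdem, signElt, one_ne_zero, if_false, Finset.sum_range_succ,
      Finset.sum_range_zero, pow_zero, pow_one, inv_neg, inv_one, Nat.cast_ofNat]
    module

theorem isPrimitiveRoot_neg_one (h2 : (2 : k) ≠ 0) : IsPrimitiveRoot (-1 : k) 2 :=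
  IsPrimitiveRoot.mk_of_lt _ (by norm_num) (by norm_num) fun l hl hl2 ↦ by
    rw [show l = 1 by lia, pow_one]
    exact fun h ↦ h2 (by linear_combination -h)

namespace Admissible

variable (h : Admissible n q)
include h

theorem half_sq_cast_ne_zero : ((n ^ 2 / 2 : ℕ) : k) ≠ 0 := fun h0 ↦
  pow_ne_zero 2 h.natCast_ne_zero <| by
    rw [← Nat.cast_pow, ← Nat.div_mul_cancel h.two_dvd_sq, Nat.cast_mul, h0, zero_mul]

theorem half_sq_ne_zero : n ^ 2 / 2 ≠ 0 := fun h0 ↦ h.half_sq_cast_ne_zero (by simp [h0])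

theorem eIdem_mem_weightSpace (i : ℕ) {j : ℕ} (hj : j ≤ 1) :
    eIdem k n q i j ∈ weightSpace n q (U k n q) ((q ^ 2) ^ i) ((-1) ^ j) := by
  rw [eIdem, phi_eq_spectralIdem h.two_dvd h.two_ne_zero, oneJ_eq_spectralIdem hj, mem_weightSpace,
    smul_eq_mul, smul_eq_mul, ← mul_assoc, ← mul_assoc,
    mul_spectralIdem h.half_sq_ne_zero h.primitive_sq.pow_eq_one h.weightElt_pow_half,
    (commute_spectralIdem commute_weightElt_signElt.symm i).eq, mul_assoc _ (signElt k n q),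
    mul_spectralIdem _root_.two_ne_zero (by norm_num) (by rw [sq, h.signElt_mul_self]),
    smul_mul_assoc, mul_smul_comm]
  exact ⟨rfl, rfl⟩

theorem eIdem_smul {i j : ℕ} (hj : j ≤ 1) {v : X}
    (hv : v ∈ weightSpace n q X ((q ^ 2) ^ i) ((-1) ^ j)) : eIdem k n q i j • v = v := by
  rw [mem_weightSpace] at hv
  rw [eIdem, phi_eq_spectralIdem h.two_dvd h.two_ne_zero, oneJ_eq_spectralIdem hj, mul_smul,
    spectralIdem_smul_self (by norm_num) (by exact_mod_cast h.two_ne_zero) hv.2,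
    spectralIdem_smul_self (pow_ne_zero 2 h.ne_zero) h.half_sq_cast_ne_zero hv.1]

theorem sum_eIdem :
    ∑ i ∈ Finset.range (n ^ 2 / 2), ∑ j ∈ Finset.range 2, eIdem k n q i j = 1 := by
  have hJ : ∑ j ∈ Finset.range 2, oneJ k n q j = 1 := by
    rw [← sum_spectralIdem (isPrimitiveRoot_neg_one h.two_ne_zero)
      (by exact_mod_cast h.two_ne_zero)]
    exact Finset.sum_congr rfl fun j hj ↦
      oneJ_eq_spectralIdem (Nat.le_of_lt_succ (Finset.mem_range.mp hj))
  simp only [eIdem, ← Finset.mul_sum, hJ, mul_one, phi_eq_spectralIdem h.two_dvd h.two_ne_zero]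
  exact sum_spectralIdem h.primitive_sq h.half_sq_cast_ne_zero

theorem eq_zero_of_mul_eIdem {x : U k n q} (hx : ∀ i, ∀ j ≤ 1, x * eIdem k n q i j = 0) :
    x = 0 := by
  rw [← mul_one x, ← h.sum_eIdem, Finset.mul_sum]
  refine Finset.sum_eq_zero fun i _ ↦ ?_
  rw [Finset.mul_sum]
  exact Finset.sum_eq_zero fun j hj ↦ hx i j (Nat.le_of_lt_succ (Finset.mem_range.mp hj))

end Admissible

end WeightSpaces

/-! ### Lowest weight strings -/

section PowSpan

variable {k A X : Type*} [Field k] [Ring A] [AddCommGroup X] [Module k X] [Module A X]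

variable (k) in
/-- The span of the string `v, x • v, x ^ 2 • v, …` of an element `x` of the algebra. -/
def powSpan (x : A) (v : X) : Submodule k X :=
  Submodule.span k (Set.range fun s : ℕ ↦ x ^ s • v)

variable {x : A} {v : X} {d : ℕ}

theorem pow_smul_mem_powSpan (s : ℕ) : x ^ s • v ∈ powSpan k x v :=
  Submodule.subset_span ⟨s, rfl⟩

theorem self_mem_powSpan : v ∈ powSpan k x v := by
  simpa only [pow_zero, one_smul] using pow_smul_mem_powSpan (k := k) (x := x) (v := v) 0

theorem pow_smul_eq_zero_of_le (hx : x ^ d • v = 0) {s : ℕ} (hs : d ≤ s) : x ^ s • v = 0 := by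
  rw [← Nat.sub_add_cancel hs, pow_add, mul_smul, hx, smul_zero]

theorem exists_eq_sum_pow_smul (hx : x ^ d • v = 0) {y : X} (hy : y ∈ powSpan k x v) :
    ∃ f : ℕ → k, ∑ s ∈ Finset.range d, f s • x ^ s • v = y := by
  refine (Submodule.mem_span_image_finset_iff_exists_fun' k).mp (Submodule.span_le.mpr ?_ hy)
  rintro _ ⟨s, rfl⟩
  rcases lt_or_ge s d with hs | hs
  · exact Submodule.subset_span ⟨s, by simpa using hs, rfl⟩
  · simp only [pow_smul_eq_zero_of_le hx hs, SetLike.mem_coe, zero_mem]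

variable [Algebra k A] [IsScalarTower k A X]

theorem smul_mem_powSpan {y : X} (hy : y ∈ powSpan k x v) : x • y ∈ powSpan k x v := by
  suffices h : powSpan k x v ≤ (powSpan k x v).comap (Algebra.lsmul k k X x) from h hy
  refine Submodule.span_le.mpr ?_
  rintro _ ⟨s, rfl⟩
  have step : x • x ^ s • v = x ^ (s + 1) • v := by rw [← mul_smul, ← pow_succ']
  exact (congrArg (· ∈ powSpan k x v) step).mpr (pow_smul_mem_powSpan (s + 1))

theorem pow_smul_sum_pow_smul (hx : x ^ d • v = 0) {f : ℕ → k} {m s₀ : ℕ} (hm : s₀ < m)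
    (hd : s₀ < d) (hf : ∀ s < s₀, f s = 0) :
    x ^ (d - 1 - s₀) • ∑ s ∈ Finset.range m, f s • x ^ s • v = f s₀ • x ^ (d - 1) • v := by
  rw [Finset.smul_sum, Finset.sum_eq_single_of_mem s₀ (Finset.mem_range.mpr hm)]
  · rw [smul_comm, ← mul_smul, ← pow_add, Nat.sub_add_cancel (by lia)]
  · intro s _ hne
    rcases lt_or_gt_of_ne hne with hs | hs
    · rw [hf s hs, zero_smul, smul_zero]
    · rw [smul_comm, ← mul_smul, ← pow_add, pow_smul_eq_zero_of_le hx (by lia), smul_zero]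

theorem exists_pow_smul_eq_smul_pow_pred_smul (hx : x ^ d • v = 0) {y : X}
    (hy : y ∈ powSpan k x v) (hy0 : y ≠ 0) :
    ∃ m, ∃ c : k, c ≠ 0 ∧ x ^ m • y = c • x ^ (d - 1) • v := by
  obtain ⟨f, rfl⟩ := exists_eq_sum_pow_smul hx hy
  obtain ⟨t, ht, hft⟩ := Finset.exists_ne_zero_of_sum_ne_zero hy0
  have hex : ∃ s, s < d ∧ f s ≠ 0 := ⟨t, Finset.mem_range.mp ht, fun h ↦ hft (by rw [h, zero_smul])⟩
  classical
  obtain ⟨hlt, hne⟩ := Nat.find_spec hex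
  exact ⟨_, _, hne, pow_smul_sum_pow_smul hx hlt hlt fun s hs ↦
    not_not.mp fun hfs ↦ Nat.find_min hex hs ⟨hs.trans hlt, hfs⟩⟩

theorem coeff_eq_zero_of_sum_pow_smul_eq_zero (hx : x ^ d • v = 0) (hne : x ^ (d - 1) • v ≠ 0)
    {f : ℕ → k} {m : ℕ} (hmd : m ≤ d) (h : ∑ s ∈ Finset.range m, f s • x ^ s • v = 0) :
    ∀ s < m, f s = 0 := by
  intro s
  induction s using Nat.strong_induction_on with
  | _ s ih =>
    intro hs
    have top := pow_smul_sum_pow_smul hx hs (hs.trans_le hmd) fun t ht ↦ ih t ht (ht.trans hs)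
    rw [h, smul_zero] at top
    exact (smul_eq_zero.mp top.symm).resolve_right hne

theorem linearIndependent_pow_smul (hx : x ^ d • v = 0) (hne : x ^ (d - 1) • v ≠ 0) :
    LinearIndependent k fun s : Fin d ↦ x ^ (s : ℕ) • v := by
  refine Fintype.linearIndependent_iff.mpr fun g hg i ↦ ?_
  have := coeff_eq_zero_of_sum_pow_smul_eq_zero hx hne le_rfl
    (f := fun s ↦ if hs : s < d then g ⟨s, hs⟩ else 0)
    (by simpa [Finset.sum_range] using hg) i i.2
  simpa using this

theorem exists_basis_pow_smul (hx : x ^ d • v = 0) (hne : x ^ (d - 1) • v ≠ 0)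
    (htop : powSpan k x v = ⊤) :
    ∃ b : Module.Basis (Fin d) k X, ∀ s, b s = x ^ (s : ℕ) • v := by
  refine ⟨.mk (linearIndependent_pow_smul hx hne) fun y _ ↦ ?_, fun s ↦ by simp⟩
  obtain ⟨f, rfl⟩ := exists_eq_sum_pow_smul hx (htop ▸ Submodule.mem_top : y ∈ powSpan k x v)
  rw [Finset.sum_range]
  exact Submodule.sum_mem _ fun i _ ↦ Submodule.smul_mem _ _ (Submodule.subset_span ⟨i, rfl⟩)

end PowSpan

section LowestVectors

variable {k : Type} [Field k] {n : ℕ} {q : k}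

/-- The structure constants of the action of `F` on the `E`-string of a lowest weight vector
of weight `q ^ (d - 1)`: `F E^s v = lowerCoeff q d s • E^(s-1) v`. -/
def lowerCoeff (q : k) (d s : ℕ) : k := gauss k q⁻¹ s * (1 - q⁻¹ ^ s * q ^ d)

theorem lowerCoeff_zero (d : ℕ) : lowerCoeff q d 0 = 0 := by rw [lowerCoeff, gauss_zero, zero_mul]

theorem Admissible.lowerCoeff_self (h : Admissible n q) (d : ℕ) : lowerCoeff q d d = 0 := by
  rw [lowerCoeff, ← mul_pow, inv_mul_cancel₀ h.ne_zero, one_pow, sub_self, mul_zero]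

theorem Admissible.lowerCoeff_ne_zero (h : Admissible n q) {d s : ℕ} (hs : s ≠ 0)
    (hsn : s < n ^ 2) (hd : d ≤ n ^ 2) (hsd : s ≠ d) : lowerCoeff q d s ≠ 0 := by
  refine mul_ne_zero (gauss_ne_zero h.primitive_inv hs hsn) fun h1 ↦ ?_
  rw [sub_eq_zero, eq_comm, inv_pow, inv_mul_eq_one₀ (pow_ne_zero s h.ne_zero)] at h1
  rcases hd.lt_or_eq with hd | rfl
  · exact hsd (h.primitive.pow_inj hsn hd h1)
  · exact h.primitive.pow_ne_one_of_pos_of_lt hs hsn (h1.trans h.primitive.pow_eq_one)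

variable {X Y : Type*} [AddCommGroup X] [Module k X] [Module (U k n q) X]
  [IsScalarTower k (U k n q) X] [AddCommGroup Y] [Module k Y] [Module (U k n q) Y]
  [IsScalarTower k (U k n q) Y]

variable (n q) in
/-- `v` is killed by `F` and has weight `q ^ (d - 1)` and sign `ε`. The weight is written without
subtraction. -/
structure IsLowest (d : ℕ) (ε : k) (v : X) : Prop where
  F_smul : F k n q • v = 0
  mem_weightSpace : v ∈ weightSpace n q X (q⁻¹ * q ^ d) ε

variable (n q) in
/-- `v` is a lowest weight vector whose `E`-string `v, E v, …, E^(d-1) v` has length exactly `d`,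
so that it spans a copy of the simple module of dimension `d` and sign `ε`. -/
structure IsLowestString (d : ℕ) (ε : k) (v : X) : Prop extends IsLowest n q d ε v where
  E_pow_smul : E k n q ^ d • v = 0
  E_pow_pred_smul : E k n q ^ (d - 1) • v ≠ 0
  pos : 0 < d
  le_sq : d ≤ n ^ 2

variable {d : ℕ} {ε : k} {v : X}

theorem Admissible.F_smul_E_pow_smul (h : Admissible n q)
    (hv : v ∈ weightSpace n q X (q⁻¹ * q ^ d) ε) (s : ℕ) : F k n q • E k n q ^ s • v =
      q⁻¹ ^ s • E k n q ^ s • F k n q • v + lowerCoeff q d s • E k n q ^ (s - 1) • v := by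
  cases s with
  | zero => rw [pow_zero, pow_zero, one_smul, one_smul, one_smul, lowerCoeff_zero, zero_smul,
      add_zero]
  | succ s =>
    have swap : E k n q ^ s • (q⁻¹ * q ^ d) • v = (q⁻¹ * q ^ d) • E k n q ^ s • v :=
      smul_comm _ _ _
    rw [← mul_smul, mul_pow_succ_of_skew_add F_mul_E h.weightElt_mul_E, add_smul, smul_assoc,
      smul_assoc, sub_smul, smul_assoc, mul_smul _ (F k n q), mul_smul _ (weightElt k n q),
      (mem_weightSpace.mp hv).1, swap, Nat.add_sub_cancel, lowerCoeff, pow_succ q⁻¹, one_mul]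
    generalize E k n q ^ s • v = w, E k n q ^ (s + 1) • F k n q • v = z
    module

namespace IsLowest

theorem F_smul_E_pow_smul (hv : IsLowest n q d ε v) (h : Admissible n q) (s : ℕ) :
    F k n q • E k n q ^ s • v = lowerCoeff q d s • E k n q ^ (s - 1) • v := by
  rw [h.F_smul_E_pow_smul hv.mem_weightSpace, hv.F_smul, smul_zero, smul_zero, zero_add]

theorem F_smul_sum_E_pow_smul (hv : IsLowest n q d ε v) (h : Admissible n q) (f : ℕ → k)
    (m : ℕ) : F k n q • ∑ s ∈ Finset.range (m + 1), f s • E k n q ^ s • v =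
      ∑ s ∈ Finset.range m, (f (s + 1) * lowerCoeff q d (s + 1)) • E k n q ^ s • v := by
  rw [Finset.smul_sum, Finset.sum_range_succ']
  simp only [smul_comm (F k n q) (_ : k), hv.F_smul_E_pow_smul h, lowerCoeff_zero, zero_smul,
    smul_zero, add_zero, smul_smul, Nat.add_sub_cancel]

theorem E_pow_smul_mem_weightSpace (hv : IsLowest n q d ε v) (h : Admissible n q) (s : ℕ) :
    E k n q ^ s • v ∈ weightSpace n q X ((q⁻¹ ^ 2) ^ s * (q⁻¹ * q ^ d)) ((-1) ^ s * ε) :=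
  h.E_pow_smul_mem_weightSpace hv.mem_weightSpace s

theorem smul_mem_powSpan (hv : IsLowest n q d ε v) (h : Admissible n q) (u : U k n q) {y : X}
    (hy : y ∈ powSpan k (E k n q) v) : u • y ∈ powSpan k (E k n q) v := by
  have of_string (u : U k n q) (hu : ∀ s, u • E k n q ^ s • v ∈ powSpan k (E k n q) v) :
      ∀ y ∈ powSpan k (E k n q) v, u • y ∈ powSpan k (E k n q) v := by
    refine fun y hy ↦ (Submodule.span_le.mpr ?_ : powSpan k (E k n q) v ≤
      (powSpan k (E k n q) v).comap (Algebra.lsmul k k X u)) hy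
    rintro _ ⟨s, rfl⟩
    exact hu s
  refine smul_mem_of_generators (of_string _ fun s ↦ ?_) (of_string _ fun s ↦ ?_)
    (fun y hy ↦ QFL.smul_mem_powSpan hy) (of_string _ fun s ↦ ?_) u y hy
  · rw [h.K_smul_of_mem_weightSpace (hv.E_pow_smul_mem_weightSpace h s)]
    exact Submodule.smul_mem _ _ (pow_smul_mem_powSpan s)
  · rw [h.Kh_smul_of_mem_weightSpace (hv.E_pow_smul_mem_weightSpace h s)]
    exact Submodule.smul_mem _ _ (pow_smul_mem_powSpan s)
  · rw [hv.F_smul_E_pow_smul h]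
    exact Submodule.smul_mem _ _ (pow_smul_mem_powSpan (s - 1))

end IsLowest

namespace IsLowestString

theorem eq_smul_of_F_smul_eq_zero (hv : IsLowestString n q d ε v) (h : Admissible n q) {y : X}
    (hy : y ∈ powSpan k (E k n q) v) (hF : F k n q • y = 0) : ∃ c : k, y = c • v := by
  obtain ⟨f, rfl⟩ := exists_eq_sum_pow_smul hv.E_pow_smul hy
  obtain ⟨m, rfl⟩ : ∃ m, d = m + 1 := ⟨d - 1, (Nat.sub_add_cancel hv.pos).symm⟩
  rw [hv.F_smul_sum_E_pow_smul h] at hF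
  have hf : ∀ s < m, f (s + 1) = 0 := fun s hs ↦
    (mul_eq_zero.mp (coeff_eq_zero_of_sum_pow_smul_eq_zero hv.E_pow_smul hv.E_pow_pred_smul
      m.le_succ hF s hs)).resolve_right
      (h.lowerCoeff_ne_zero s.succ_ne_zero (by linarith [hv.le_sq]) hv.le_sq (by lia))
  refine ⟨f 0, ?_⟩
  rw [Finset.sum_range_succ', Finset.sum_eq_zero fun s hs ↦ by
    rw [hf s (Finset.mem_range.mp hs), zero_smul], zero_add, pow_zero, one_smul]

theorem exists_linearMap (hv : IsLowestString n q d ε v) (h : Admissible n q)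
    (htop : powSpan k (E k n q) v = ⊤) {w : Y} (hw : IsLowest n q d ε w)
    (hE : E k n q ^ d • w = 0) : ∃ f : X →ₗ[U k n q] Y, f v = w := by
  obtain ⟨b, hb⟩ := exists_basis_pow_smul hv.E_pow_smul hv.E_pow_pred_smul htop
  let f : X →ₗ[k] Y := b.constr k fun s ↦ E k n q ^ (s : ℕ) • w
  have hf (s : ℕ) : f (E k n q ^ s • v) = E k n q ^ s • w := by
    rcases lt_or_ge s d with hs | hs
    · simpa [f, hb] using b.constr_basis k (fun s ↦ E k n q ^ (s : ℕ) • w) ⟨s, hs⟩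
    · rw [pow_smul_eq_zero_of_le hv.E_pow_smul hs, map_zero, pow_smul_eq_zero_of_le hE hs]
  have of_string (u : U k n q) (hu : ∀ s, f (u • E k n q ^ s • v) = u • E k n q ^ s • w) (x : X) :
      f (u • x) = u • f x :=
    LinearMap.congr_fun (f := f ∘ₗ Algebra.lsmul k k X u) (g := Algebra.lsmul k k Y u ∘ₗ f)
      (LinearMap.ext_on_range htop fun s ↦ by simp [hu, hf]) x
  have map_smul := map_smul_of_generators (n := n) (q := q) (f := f)
    (of_string _ fun s ↦ by
      rw [h.K_smul_of_mem_weightSpace (hv.E_pow_smul_mem_weightSpace h s), f.map_smul, hf,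
        h.K_smul_of_mem_weightSpace (hw.E_pow_smul_mem_weightSpace h s)])
    (of_string _ fun s ↦ by
      rw [h.Kh_smul_of_mem_weightSpace (hv.E_pow_smul_mem_weightSpace h s), f.map_smul, hf,
        h.Kh_smul_of_mem_weightSpace (hw.E_pow_smul_mem_weightSpace h s)])
    (of_string _ fun s ↦ by rw [← mul_smul, ← mul_smul, ← pow_succ', hf])
    (of_string _ fun s ↦ by
      rw [hv.F_smul_E_pow_smul h, hw.F_smul_E_pow_smul h, f.map_smul, hf])
  exact ⟨{ f with map_smul' := map_smul }, by simpa using hf 0⟩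

end IsLowestString

end LowestVectors

/-! ### The modules induced from a character of the group-like elements -/

section PbwModule

variable {k : Type} [Field k] {n : ℕ} {q : k}

variable (k n) in
/-- The space with basis `F ^ a E ^ b`, for `a, b < n²`: the underlying space of the module
induced from a character of the group-like elements. -/
abbrev PbwSpace := (Fin (n ^ 2) × Fin (n ^ 2)) →₀ k

variable (k n) in
/-- The basis vector `F ^ a E ^ b`, which is zero unless `a, b < n²`. -/
def pbwVec (a b : ℕ) : PbwSpace k n :=
  if h : a < n ^ 2 ∧ b < n ^ 2 then Finsupp.single (⟨a, h.1⟩, ⟨b, h.2⟩) 1 else 0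

theorem pbwVec_fin (p : Fin (n ^ 2) × Fin (n ^ 2)) :
    pbwVec k n p.1 p.2 = Finsupp.single p 1 := by
  simp [pbwVec]

theorem pbwVec_eq_zero {a b : ℕ} (h : n ^ 2 ≤ a ∨ n ^ 2 ≤ b) : pbwVec k n a b = 0 :=
  dif_neg (by lia)

theorem pbwVec_apply (a b : ℕ) (p : Fin (n ^ 2) × Fin (n ^ 2)) :
    pbwVec k n a b p = if a = p.1 ∧ b = p.2 then 1 else 0 := by
  by_cases h : a < n ^ 2 ∧ b < n ^ 2
  · simp [pbwVec, h, Finsupp.single_apply, Prod.ext_iff, Fin.ext_iff]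
  · rw [pbwVec_eq_zero (by lia), if_neg (by lia), Finsupp.zero_apply]

variable {M : Type*} [AddCommGroup M] [Module k M]

theorem pbwSpace_hom_ext {f g : PbwSpace k n →ₗ[k] M}
    (h : ∀ a b, f (pbwVec k n a b) = g (pbwVec k n a b)) : f = g :=
  Finsupp.lhom_ext' fun p ↦ LinearMap.ext_ring (by simpa [pbwVec_fin] using h p.1 p.2)

/-- The linear map with prescribed values on the basis vectors `F ^ a E ^ b`. -/
def pbwLift (f : ℕ → ℕ → M) : PbwSpace k n →ₗ[k] M :=
  Finsupp.linearCombination k fun p ↦ f p.1 p.2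

theorem pbwLift_pbwVec_of_lt (f : ℕ → ℕ → M) {a b : ℕ} (ha : a < n ^ 2) (hb : b < n ^ 2) :
    pbwLift f (pbwVec k n a b) = f a b := by
  simp [pbwLift, pbwVec, ha, hb]

theorem pbwLift_pbwVec {f : ℕ → ℕ → M} {a b : ℕ} (hf : n ^ 2 ≤ a ∨ n ^ 2 ≤ b → f a b = 0) :
    pbwLift f (pbwVec k n a b) = f a b := by
  by_cases h : a < n ^ 2 ∧ b < n ^ 2
  · exact pbwLift_pbwVec_of_lt f h.1 h.2
  · rw [pbwVec_eq_zero (by lia), map_zero, hf (by lia)]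

variable (n) in
/-- The diagonal operators: `pbwDiag n c x` is the action of a group-like element `g` with
`g E = c E g` and `g F = c⁻¹ F g` which acts on the generating vector by `x`. -/
def pbwDiag (c x : k) : Module.End k (PbwSpace k n) :=
  pbwLift fun a b ↦ (x * c ^ b * c⁻¹ ^ a) • pbwVec k n a b

theorem pbwDiag_pbwVec (c x : k) (a b : ℕ) :
    pbwDiag n c x (pbwVec k n a b) = (x * c ^ b * c⁻¹ ^ a) • pbwVec k n a b :=
  pbwLift_pbwVec fun h ↦ by rw [pbwVec_eq_zero h, smul_zero]

theorem pbwDiag_one_one : pbwDiag n (1 : k) 1 = 1 :=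
  pbwSpace_hom_ext fun a b ↦ by
    rw [pbwDiag_pbwVec, inv_one, one_pow, one_pow, one_mul, one_mul, one_smul,
      Module.End.one_apply]

theorem pbwDiag_mul (c x c' x' : k) :
    pbwDiag n c x * pbwDiag n c' x' = pbwDiag n (c * c') (x * x') :=
  pbwSpace_hom_ext fun a b ↦ by
    rw [Module.End.mul_apply, pbwDiag_pbwVec, map_smul, pbwDiag_pbwVec, pbwDiag_pbwVec, smul_smul,
      mul_inv, mul_pow, mul_pow]
    congr 1
    ring

theorem pbwDiag_pow (c x : k) (s : ℕ) : pbwDiag n c x ^ s = pbwDiag n (c ^ s) (x ^ s) := by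
  induction s with
  | zero => simp only [pow_zero, pbwDiag_one_one]
  | succ s ih => rw [pow_succ (pbwDiag n c x), ih, pbwDiag_mul, pow_succ c, pow_succ x]

variable (k n) in
/-- The action of `F`. -/
def pbwF : Module.End k (PbwSpace k n) := pbwLift fun a b ↦ pbwVec k n (a + 1) b

theorem pbwF_pbwVec (a b : ℕ) : pbwF k n (pbwVec k n a b) = pbwVec k n (a + 1) b :=
  pbwLift_pbwVec fun h ↦ pbwVec_eq_zero (by lia)

theorem pbwF_pow_pbwVec (s a b : ℕ) : (pbwF k n ^ s) (pbwVec k n a b) = pbwVec k n (a + s) b := by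
  induction s with
  | zero => simp
  | succ s ih => rw [pow_succ' (pbwF k n) s, Module.End.mul_apply, ih, pbwF_pbwVec, add_assoc]

/-- The structure constants in `E F^a v = q^a F^a E v + raiseCoeff q l a • F^(a-1) v` for a vector
`v` of weight `l`. -/
def raiseCoeff (q l : k) (a : ℕ) : k := -(q * gauss k q a * (1 - q ^ (a - 1) * l))

theorem raiseCoeff_zero (l : k) : raiseCoeff q l 0 = 0 := by simp [raiseCoeff, gauss_zero]

theorem raiseCoeff_succ (hq : q ≠ 0) (l : k) (a : ℕ) :
    raiseCoeff q l a = q⁻¹ * raiseCoeff q l (a + 1) + (1 - (q ^ 2) ^ a * l) := by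
  simp only [raiseCoeff, Nat.add_sub_cancel]
  cases a with
  | zero => simp [gauss_zero, gauss_succ, hq]
  | succ a =>
    have hgauss := (gauss_succ' q (a + 1)).symm.trans (gauss_succ q (a + 1))
    rw [gauss_succ' q (a + 1), Nat.add_sub_cancel]
    field_simp
    linear_combination (-(q ^ (a + 1) * l)) * hgauss

variable (n) in
/-- The action of `E` on the module induced from a character of weight `l`. -/
def pbwE (q l : k) : Module.End k (PbwSpace k n) := pbwLift fun a b ↦
  q ^ a • pbwVec k n a (b + 1) + raiseCoeff q ((q⁻¹ ^ 2) ^ b * l) a • pbwVec k n (a - 1) b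

theorem pbwE_pbwVec (h : Admissible n q) (l : k) (a b : ℕ) :
    pbwE n q l (pbwVec k n a b) = q ^ a • pbwVec k n a (b + 1) +
      raiseCoeff q ((q⁻¹ ^ 2) ^ b * l) a • pbwVec k n (a - 1) b := by
  refine pbwLift_pbwVec fun hab ↦ ?_
  rw [pbwVec_eq_zero (by lia), smul_zero, zero_add]
  by_cases ha : a = n ^ 2
  · rw [ha, raiseCoeff, gauss_eq_zero h.two_le_sq h.primitive, mul_zero, zero_mul, neg_zero,
      zero_smul]
  · rw [pbwVec_eq_zero (by lia), smul_zero]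

theorem pbwE_pow_pbwVec_zero (h : Admissible n q) (l : k) (s b : ℕ) :
    (pbwE n q l ^ s) (pbwVec k n 0 b) = pbwVec k n 0 (b + s) := by
  induction s with
  | zero => simp
  | succ s ih =>
    rw [pow_succ' (pbwE n q l) s, Module.End.mul_apply, ih, pbwE_pbwVec h, raiseCoeff_zero,
      zero_smul, add_zero, pow_zero, one_smul, add_assoc]

theorem pbwDiag_mul_pbwF (c x : k) : pbwDiag n c x * pbwF k n = c⁻¹ • (pbwF k n * pbwDiag n c x) :=
  pbwSpace_hom_ext fun a b ↦ by
    rw [LinearMap.smul_apply, Module.End.mul_apply, Module.End.mul_apply, pbwF_pbwVec,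
      pbwDiag_pbwVec, pbwDiag_pbwVec, map_smul, pbwF_pbwVec, smul_smul]
    congr 1
    ring

theorem pbwDiag_mul_pbwE (h : Admissible n q) {c : k} (hc : c ≠ 0) (x l : k) :
    pbwDiag n c x * pbwE n q l = c • (pbwE n q l * pbwDiag n c x) :=
  pbwSpace_hom_ext fun a b ↦ by
    rw [LinearMap.smul_apply, Module.End.mul_apply, Module.End.mul_apply, pbwE_pbwVec h,
      pbwDiag_pbwVec, map_smul, map_add, map_smul, map_smul, pbwE_pbwVec h, pbwDiag_pbwVec,
      pbwDiag_pbwVec]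
    cases a with
    | zero => rw [raiseCoeff_zero]; module
    | succ a =>
      have hca : c⁻¹ ^ a = c * c⁻¹ ^ (a + 1) := by
        rw [pow_succ', ← mul_assoc, mul_inv_cancel₀ hc, one_mul]
      rw [Nat.add_sub_cancel, hca]
      module

theorem pbwF_mul_pbwE (h : Admissible n q) (l : k) : pbwF k n * pbwE n q l =
    q⁻¹ • (pbwE n q l * pbwF k n) + (1 : k) • (1 - pbwDiag n (q⁻¹ ^ 2) l) :=
  pbwSpace_hom_ext fun a b ↦ by
    have hq (s : ℕ) : q⁻¹ * q ^ (s + 1) = q ^ s := by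
      rw [pow_succ', ← mul_assoc, inv_mul_cancel₀ h.ne_zero, one_mul]
    have hcoeff := raiseCoeff_succ h.ne_zero ((q⁻¹ ^ 2) ^ b * l) a
    have hweight : l * (q⁻¹ ^ 2) ^ b * (q⁻¹ ^ 2)⁻¹ ^ a = (q ^ 2) ^ a * ((q⁻¹ ^ 2) ^ b * l) := by
      rw [inv_pow q, inv_inv]; ring
    rw [LinearMap.add_apply, LinearMap.smul_apply, LinearMap.smul_apply, LinearMap.sub_apply,
      Module.End.mul_apply, Module.End.mul_apply, Module.End.one_apply, pbwE_pbwVec h,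
      pbwF_pbwVec, pbwE_pbwVec h, pbwDiag_pbwVec, map_add, map_smul, map_smul, pbwF_pbwVec,
      pbwF_pbwVec, Nat.add_sub_cancel, hweight, smul_add, smul_smul, smul_smul, hq, one_smul,
      add_assoc]
    congr 1
    cases a with
    | zero =>
      rw [raiseCoeff_zero] at hcoeff ⊢
      linear_combination (norm := module) hcoeff • pbwVec k n 0 b
    | succ a =>
      rw [Nat.add_sub_cancel]
      linear_combination (norm := module) hcoeff • pbwVec k n (a + 1) b

theorem pbwF_pow_sq : pbwF k n ^ n ^ 2 = 0 :=
  pbwSpace_hom_ext fun a b ↦ by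
    rw [pbwF_pow_pbwVec, pbwVec_eq_zero (by lia), LinearMap.zero_apply]

/-- By the commutation relation, `E ^ (n²)` commutes with `F`, so it suffices that it kills the
vectors `E ^ b`, which generate the module under `F`. -/
theorem pbwE_pow_sq (h : Admissible n q) (l : k) : pbwE n q l ^ n ^ 2 = 0 := by
  have hinv : q⁻¹ ≠ 0 := inv_ne_zero h.ne_zero
  have hcomm : Commute (pbwF k n) (pbwE n q l ^ n ^ 2) := by
    have := mul_pow_succ_of_skew_add (A := Module.End k (PbwSpace k n)) (pbwF_mul_pbwE h l)
      (pbwDiag_mul_pbwE h (pow_ne_zero 2 hinv) l l) (n ^ 2 - 1)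
    rwa [Nat.sub_add_cancel (Nat.one_le_of_lt h.two_le_sq),
      gauss_eq_zero h.two_le_sq h.primitive_inv, mul_zero, zero_smul, add_zero,
      h.primitive_inv.pow_eq_one, one_smul] at this
  refine pbwSpace_hom_ext fun a b ↦ ?_
  rw [← zero_add a, ← pbwF_pow_pbwVec, ← Module.End.mul_apply, ← (hcomm.pow_left a).eq,
    Module.End.mul_apply, pbwE_pow_pbwVec_zero h, pbwVec_eq_zero (by lia), map_zero,
    LinearMap.zero_apply]

/-- A character of the group-like elements, by its values `x` on `K` and `l` on `K⁻¹K̂`. -/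
structure IsCharacter (n : ℕ) (x l : k) : Prop where
  pow_eq_one : x ^ n = 1
  pow_mul_sq_eq_one : l ^ n * x ^ 2 = 1

variable (n) in
/-- The images of the generators `K, K̂, E, F` in the module induced from a character. -/
def pbwGen (q x l : k) : Fin 4 → Module.End k (PbwSpace k n) :=
  ![pbwDiag n (q ^ n) x, pbwDiag n (q ^ n * (q ^ 2)⁻¹) (x * l), pbwE n q l, pbwF k n]

theorem pbwDiag_mul_mul_pow {c x : k} {m : ℕ} (hm : 0 < m) (hcx : pbwDiag n c x ^ m = 1)
    {a : k} {T : Module.End k (PbwSpace k n)} (hT : pbwDiag n c x * T = a • (T * pbwDiag n c x)) :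
    pbwDiag n c x * T * pbwDiag n c x ^ (m - 1) = a • T := by
  rw [hT, smul_mul_assoc, mul_assoc, ← pow_succ', Nat.sub_add_cancel hm, hcx, mul_one]

theorem lift_pbwGen_eq_of_rel (h : Admissible n q) {x l : k} (hχ : IsCharacter n x l)
    ⦃a b : FreeAlgebra k (Fin 4)⦄ (hab : Rel k n q a b) :
    FreeAlgebra.lift k (pbwGen n q x l) a = FreeAlgebra.lift k (pbwGen n q x l) b := by
  have hqn : q ^ n ≠ 0 := pow_ne_zero n h.ne_zero
  have hc : q ^ n * (q ^ 2)⁻¹ ≠ 0 := mul_ne_zero hqn (inv_ne_zero (pow_ne_zero 2 h.ne_zero))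
  have K_pow : pbwDiag n (q ^ n) x ^ n = 1 := by
    rw [pbwDiag_pow, h.primitive_pow.pow_eq_one, hχ.pow_eq_one, pbwDiag_one_one]
  have hx : x ≠ 0 := by
    rintro rfl
    exact zero_ne_one ((zero_pow h.pos.ne').symm.trans hχ.pow_eq_one)
  have pow_pred {c : k} (hc : c ^ n = 1) : c ^ (n - 1) = c⁻¹ :=
    eq_inv_of_mul_eq_one_left (by rw [← pow_succ, Nat.sub_add_cancel h.pos, hc])
  have Kinv_eq : pbwDiag n (q ^ n) x ^ (n - 1) = pbwDiag n (q ^ n)⁻¹ x⁻¹ := by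
    rw [pbwDiag_pow, pow_pred h.primitive_pow.pow_eq_one, pow_pred hχ.pow_eq_one]
  have Kh_pow : pbwDiag n (q ^ n * (q ^ 2)⁻¹) (x * l) ^ n =
      (pbwDiag n (q ^ n) x ^ (n - 1)) ^ 2 := by
    rw [Kinv_eq, pbwDiag_pow, pbwDiag_pow, mul_pow, mul_pow, h.primitive_pow.pow_eq_one,
      hχ.pow_eq_one, one_mul, one_mul, eq_inv_of_mul_eq_one_left hχ.pow_mul_sq_eq_one]
    simp only [inv_pow, ← pow_mul, mul_comm]
  have Kh_pow_sq : pbwDiag n (q ^ n * (q ^ 2)⁻¹) (x * l) ^ n ^ 2 = 1 := by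
    rw [(congrArg (_ ^ ·) (sq n)).trans (pow_mul _ n n), Kh_pow, ← pow_mul, ← pow_mul,
      show (n - 1) * (2 * n) = n * ((n - 1) * 2) by ring, pow_mul, K_pow, one_pow]
  have lift_ι (m : Fin 4) : FreeAlgebra.lift k (pbwGen n q x l) (FreeAlgebra.ι k m) =
      pbwGen n q x l m := FreeAlgebra.lift_ι_apply _ _
  cases hab <;> simp only [map_mul, map_pow, map_smul, map_sub, map_one, map_zero, lift_ι] <;>
    simp only [pbwGen, Matrix.cons_val]
  · exact K_pow
  · exact Kh_pow
  · rw [pbwDiag_mul, pbwDiag_mul, mul_comm (q ^ n), mul_comm x]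
  · exact pbwDiag_mul_mul_pow h.pos K_pow (pbwDiag_mul_pbwE h hqn _ _)
  · exact pbwDiag_mul_mul_pow h.pos K_pow (pbwDiag_mul_pbwF _ _)
  · exact pbwDiag_mul_mul_pow (pow_pos h.pos 2) Kh_pow_sq (pbwDiag_mul_pbwE h hc _ _)
  · rw [pbwDiag_mul_mul_pow (pow_pos h.pos 2) Kh_pow_sq (pbwDiag_mul_pbwF _ _), mul_inv, inv_inv]
  · exact pbwE_pow_sq h l
  · exact pbwF_pow_sq
  · rw [sub_eq_of_eq_add' (pbwF_mul_pbwE h l), Kinv_eq, pbwDiag_mul, one_smul,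
      inv_mul_cancel_left₀ hqn, inv_mul_cancel_left₀ hx, inv_pow]

end PbwModule

section PbwRep

variable {k : Type} [Field k] {n : ℕ} {q : k}

/-- The module with basis `F ^ a E ^ b` induced from a character of the group-like elements. -/
def pbwRep (h : Admissible n q) {x l : k} (hχ : IsCharacter n x l) :
    U k n q →ₐ[k] Module.End k (PbwSpace k n) :=
  RingQuot.liftAlgHom k ⟨FreeAlgebra.lift k (pbwGen n q x l), lift_pbwGen_eq_of_rel h hχ⟩

section

variable (h : Admissible n q) {x l : k} (hχ : IsCharacter n x l)

theorem pbwRep_mkAlgHom_ι (m : Fin 4) :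
    pbwRep h hχ (RingQuot.mkAlgHom k (Rel k n q) (FreeAlgebra.ι k m)) = pbwGen n q x l m :=
  (RingQuot.liftAlgHom_mkAlgHom_apply ..).trans (FreeAlgebra.lift_ι_apply ..)

theorem pbwRep_K : pbwRep h hχ (K k n q) = pbwDiag n (q ^ n) x := pbwRep_mkAlgHom_ι h hχ 0

theorem pbwRep_Kh : pbwRep h hχ (Kh k n q) = pbwDiag n (q ^ n * (q ^ 2)⁻¹) (x * l) :=
  pbwRep_mkAlgHom_ι h hχ 1

theorem pbwRep_E : pbwRep h hχ (E k n q) = pbwE n q l := pbwRep_mkAlgHom_ι h hχ 2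

theorem pbwRep_F : pbwRep h hχ (F k n q) = pbwF k n := pbwRep_mkAlgHom_ι h hχ 3

theorem pbwDiag_pbwVec_zero_zero (c x : k) :
    pbwDiag n c x (pbwVec k n 0 0) = x • pbwVec k n 0 0 := by
  rw [pbwDiag_pbwVec, pow_zero, pow_zero, mul_one, mul_one]

theorem pbwRep_weightElt_pbwVec :
    pbwRep h hχ (weightElt k n q) (pbwVec k n 0 0) = l • pbwVec k n 0 0 := by
  have hxl : x ^ (n - 1) * (x * l) = l := by
    rw [← mul_assoc, ← pow_succ, Nat.sub_add_cancel h.pos, hχ.pow_eq_one, one_mul]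
  rw [weightElt, Kinv, map_mul, map_pow, pbwRep_K, pbwRep_Kh, pbwDiag_pow, pbwDiag_mul,
    pbwDiag_pbwVec_zero_zero, hxl]

theorem pbwRep_signElt_pbwVec : pbwRep h hχ (signElt k n q) (pbwVec k n 0 0) =
    (x * (x * l) ^ (n / 2)) • pbwVec k n 0 0 := by
  rw [signElt, map_mul, map_pow, pbwRep_K, pbwRep_Kh, pbwDiag_pow, pbwDiag_mul,
    pbwDiag_pbwVec_zero_zero]

end

namespace Admissible

variable (h : Admissible n q)
include h

theorem isCharacter (i j : ℕ) :
    IsCharacter n ((-1) ^ (i + j) * (q ^ n)⁻¹ ^ i) ((q ^ 2) ^ i) where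
  pow_eq_one := by
    rw [mul_pow, pow_right_comm, (even_iff_two_dvd.mpr h.two_dvd).neg_one_pow, one_pow, one_mul,
      pow_right_comm, inv_pow, h.primitive_pow.pow_eq_one, inv_one, one_pow]
  pow_mul_sq_eq_one := by
    rw [mul_pow, pow_right_comm (-1 : k), neg_one_sq, one_pow, one_mul, pow_right_comm (q ^ 2),
      ← pow_mul q 2 n, pow_right_comm _ i, ← mul_pow, inv_pow, ← pow_mul, mul_comm n 2,
      mul_inv_cancel₀ (pow_ne_zero _ h.ne_zero), one_pow]

theorem signElt_eigenvalue (i j : ℕ) : (-1 : k) ^ (i + j) * (q ^ n)⁻¹ ^ i *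
    ((-1) ^ (i + j) * (q ^ n)⁻¹ ^ i * (q ^ 2) ^ i) ^ (n / 2) = (-1) ^ j := by
  have heven : Even (n / 2) := by obtain ⟨m, rfl⟩ := h.four_dvd; exact ⟨m, by lia⟩
  have hq2 : (q ^ 2) ^ (n / 2) = q ^ n := by rw [← pow_mul, Nat.mul_div_cancel' h.two_dvd]
  have hqn : (q ^ n) ^ (n / 2) = -1 := by rw [← pow_mul, ← h.half_sq, h.pow_half]
  have hpow : ((-1 : k) ^ (i + j) * (q ^ n)⁻¹ ^ i * (q ^ 2) ^ i) ^ (n / 2) =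
      (-1) ^ i * (q ^ n) ^ i := by
    rw [mul_pow, mul_pow, pow_right_comm (-1 : k), heven.neg_one_pow, one_pow, one_mul,
      pow_right_comm (q ^ n)⁻¹, inv_pow (q ^ n), hqn, inv_neg, inv_one, pow_right_comm (q ^ 2), hq2]
  have hsign : (-1 : k) ^ i * (-1) ^ i = 1 := by rw [← mul_pow, neg_mul_neg, one_mul, one_pow]
  calc _ = ((-1 : k) ^ i * (-1) ^ i) * (((q ^ n) ^ i)⁻¹ * (q ^ n) ^ i) * (-1) ^ j := by
        rw [hpow, inv_pow]; ring
    _ = (-1) ^ j := by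
        rw [hsign, inv_mul_cancel₀ (pow_ne_zero _ (pow_ne_zero _ h.ne_zero)), one_mul, one_mul]

/-- The induced module on whose generator `e_{2i,j}` acts by `1`. -/
def idemRep (i j : ℕ) : U k n q →ₐ[k] Module.End k (PbwSpace k n) := pbwRep h (h.isCharacter i j)

theorem idemRep_eIdem (i : ℕ) {j : ℕ} (hj : j ≤ 1) :
    h.idemRep i j (eIdem k n q i j) (pbwVec k n 0 0) = pbwVec k n 0 0 := by
  let _ : Module (U k n q) (PbwSpace k n) := Module.compHom _ (h.idemRep i j).toRingHom
  have smul_def (u : U k n q) (z : PbwSpace k n) : u • z = h.idemRep i j u z := rfl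
  have : IsScalarTower k (U k n q) (PbwSpace k n) :=
    ⟨fun c u z ↦ by rw [smul_def, map_smul, LinearMap.smul_apply, smul_def]⟩
  have hvec : pbwVec k n 0 0 ∈ weightSpace n q (PbwSpace k n) ((q ^ 2) ^ i) ((-1) ^ j) := by
    rw [mem_weightSpace, smul_def, smul_def, idemRep, pbwRep_weightElt_pbwVec,
      pbwRep_signElt_pbwVec, h.signElt_eigenvalue]
    exact ⟨rfl, rfl⟩
  exact h.eIdem_smul hj hvec

end Admissible

/-! ### The elements `α` and `γ` -/

variable (n q) in
/-- The elements `F ^ a E ^ b e_{2i,j}`. -/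
def idemMonomial (i j a b : ℕ) : U k n q :=
  F k n q ^ a * (E k n q ^ b * eIdem k n q i j)

namespace Admissible

variable (h : Admissible n q)
include h

theorem idemRep_idemMonomial (i : ℕ) {j : ℕ} (hj : j ≤ 1) (a b : ℕ) :
    h.idemRep i j (idemMonomial n q i j a b) (pbwVec k n 0 0) = pbwVec k n a b := by
  rw [idemMonomial, map_mul, map_mul, Module.End.mul_apply, Module.End.mul_apply,
    h.idemRep_eIdem i hj, map_pow, map_pow, idemRep, pbwRep_F, pbwRep_E, pbwE_pow_pbwVec_zero h,
    pbwF_pow_pbwVec, zero_add, zero_add]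

theorem idemMonomial_mem_weightSpace (i : ℕ) {j : ℕ} (hj : j ≤ 1) (a b : ℕ) :
    idemMonomial n q i j a b ∈ weightSpace n q (U k n q)
      ((q ^ 2) ^ a * ((q⁻¹ ^ 2) ^ b * (q ^ 2) ^ i)) ((-1) ^ a * ((-1) ^ b * (-1) ^ j)) :=
  h.F_pow_smul_mem_weightSpace
    (h.E_pow_smul_mem_weightSpace (h.eIdem_mem_weightSpace i hj) b) a

theorem mul_eIdem_mem_span_of_mem_pbw (i : ℕ) {j : ℕ} (hj : j ≤ 1) {x : U k n q}
    (hx : x ∈ pbw k n q) : x * eIdem k n q i j ∈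
      Submodule.span k
        {y | ∃ a b, a ≤ n ^ 2 - 2 ∧ b ≤ n ^ 2 - 1 ∧ idemMonomial n q i j a b = y} := by
  induction hx using Submodule.span_induction with
  | mem x hx =>
    obtain ⟨a, b, c, d, ha, hb, -, -, rfl⟩ := hx
    have hv := h.E_pow_smul_mem_weightSpace (h.eIdem_mem_weightSpace i hj) b
    have hK := pow_smul_of_smul (h.K_smul_of_mem_weightSpace hv) c
    have hKh := pow_smul_of_smul (h.Kh_smul_of_mem_weightSpace hv) d
    have hsmul : F k n q ^ a * K k n q ^ c * Kh k n q ^ d * E k n q ^ b * eIdem k n q i j =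
        F k n q ^ a * (K k n q ^ c • Kh k n q ^ d • E k n q ^ b • eIdem k n q i j) := by
      simp only [smul_eq_mul, mul_assoc]
    rw [hsmul, hKh, smul_comm, hK, smul_smul, mul_smul_comm]
    exact Submodule.smul_mem _ _ (Submodule.subset_span ⟨a, b, ha, hb, rfl⟩)
  | zero => rw [zero_mul]; exact Submodule.zero_mem _
  | add x y _ _ hx hy => rw [add_mul]; exact Submodule.add_mem _ hx hy
  | smul c x _ hx => rw [smul_mul_assoc]; exact Submodule.smul_mem _ _ hx

/-- In the induced module `F` maps `F ^ a E ^ b v` to `F ^ (a + 1) E ^ b v`, so its effect on the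
PBW span, where `a ≤ n² - 2`, can be undone. -/
theorem eq_zero_of_F_mul_eq_zero {x : U k n q} (hx : x ∈ pbw k n q) (hF : F k n q * x = 0) :
    x = 0 := by
  have hn := h.two_le_sq
  refine h.eq_zero_of_mul_eIdem fun i j hj ↦ ?_
  let undo : U k n q →ₗ[k] U k n q :=
    pbwLift (fun a b ↦ idemMonomial n q i j (a - 1) b) ∘ₗ
      LinearMap.applyₗ (pbwVec k n 0 0) ∘ₗ (h.idemRep i j).toLinearMap ∘ₗ
      LinearMap.mulLeft k (F k n q)
  have undo_idemMonomial : Set.EqOn undo (LinearMap.id : U k n q →ₗ[k] U k n q)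
      {y | ∃ a b, a ≤ n ^ 2 - 2 ∧ b ≤ n ^ 2 - 1 ∧ idemMonomial n q i j a b = y} := by
    rintro _ ⟨a, b, ha, hb, rfl⟩
    have hF_mul : F k n q * idemMonomial n q i j a b = idemMonomial n q i j (a + 1) b := by
      rw [idemMonomial, ← mul_assoc, ← pow_succ', idemMonomial]
    simp only [undo, LinearMap.comp_apply, LinearMap.mulLeft_apply, hF_mul,
      AlgHom.toLinearMap_apply, LinearMap.applyₗ_apply_apply, h.idemRep_idemMonomial i hj]
    rw [pbwLift_pbwVec_of_lt _ (by lia) (by lia), Nat.add_sub_cancel, LinearMap.id_apply]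
  have hundo := LinearMap.eqOn_span' undo_idemMonomial (h.mul_eIdem_mem_span_of_mem_pbw i hj hx)
  rw [LinearMap.id_apply] at hundo
  rw [← hundo]
  simp only [undo, LinearMap.comp_apply, LinearMap.mulLeft_apply, ← mul_assoc, hF,
    zero_mul, map_zero]

end Admissible

end PbwRep

section PbwStability

variable {k : Type} [Field k] {n : ℕ} {q : k}

/-- The subalgebra of elements whose right multiplication preserves a subspace. -/
def rightStabilizer {A : Type*} [Ring A] [Algebra k A] (W : Submodule k A) : Subalgebra k A where
  carrier := {u | W ≤ W.comap (LinearMap.mulRight k u)}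
  mul_mem' {u v} hu hv x hx := by
    rw [Submodule.mem_comap, LinearMap.mulRight_apply, ← mul_assoc]
    exact hv (hu hx)
  add_mem' {u v} hu hv x hx := by
    rw [Submodule.mem_comap, LinearMap.mulRight_apply, mul_add]
    exact W.add_mem (hu hx) (hv hx)
  algebraMap_mem' c x hx := by
    rw [Submodule.mem_comap, LinearMap.mulRight_apply, ← Algebra.commutes, ← Algebra.smul_def]
    exact W.smul_mem c hx

namespace Admissible

variable (h : Admissible n q)
include h

theorem monomial_mem_pbw {a : ℕ} (ha : a ≤ n ^ 2 - 2) (b c d : ℕ) :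
    F k n q ^ a * K k n q ^ c * Kh k n q ^ d * E k n q ^ b ∈ pbw k n q := by
  have hn := h.pos
  have hn2 := h.two_le_sq
  by_cases hb : b < n ^ 2
  · rw [pow_eq_pow_mod c K_pow_n, pow_eq_pow_mod d Kh_pow_sq]
    exact Submodule.subset_span ⟨a, b, c % n, d % n ^ 2, ha, by lia,
      Nat.le_sub_one_of_lt (Nat.mod_lt _ hn), Nat.le_sub_one_of_lt (Nat.mod_lt _ (by lia)), rfl⟩
  · rw [pow_eq_zero_of_le (not_lt.mp hb) E_pow_sq, mul_zero]
    exact Submodule.zero_mem _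

theorem K_mem_rightStabilizer : K k n q ∈ rightStabilizer (pbw k n q) := by
  refine Submodule.span_le.mpr ?_
  rintro _ ⟨a, b, c, d, ha, -, -, -, rfl⟩
  have hEK : E k n q ^ b * K k n q = (q ^ n)⁻¹ ^ b • (K k n q * E k n q ^ b) := by
    rw [mul_pow_of_skew (K_mul_E h.pos), smul_smul, ← mul_pow,
      inv_mul_cancel₀ (pow_ne_zero n h.ne_zero), one_pow, one_smul]
  have hKhK : Kh k n q ^ d * (K k n q * E k n q ^ b) = K k n q * (Kh k n q ^ d * E k n q ^ b) := by
    rw [← mul_assoc, ← (commute_K_Kh.pow_right d).eq, mul_assoc]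
  have hmono := h.monomial_mem_pbw ha b (c + 1) d
  simp only [pow_succ, mul_assoc] at hmono
  rw [SetLike.mem_coe, Submodule.mem_comap, LinearMap.mulRight_apply]
  simp only [mul_assoc]
  rw [hEK, mul_smul_comm, mul_smul_comm, mul_smul_comm, hKhK]
  exact Submodule.smul_mem _ _ hmono

theorem Kh_mem_rightStabilizer : Kh k n q ∈ rightStabilizer (pbw k n q) := by
  refine Submodule.span_le.mpr ?_
  rintro _ ⟨a, b, c, d, ha, -, -, -, rfl⟩
  have hc : q ^ n * (q ^ 2)⁻¹ ≠ 0 :=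
    mul_ne_zero (pow_ne_zero n h.ne_zero) (inv_ne_zero (pow_ne_zero 2 h.ne_zero))
  have hEKh : E k n q ^ b * Kh k n q =
      (q ^ n * (q ^ 2)⁻¹)⁻¹ ^ b • (Kh k n q * E k n q ^ b) := by
    rw [mul_pow_of_skew (Kh_mul_E h.pos), smul_smul, ← mul_pow, inv_mul_cancel₀ hc, one_pow,
      one_smul]
  have hmono := h.monomial_mem_pbw ha b c (d + 1)
  simp only [pow_succ, mul_assoc] at hmono
  rw [SetLike.mem_coe, Submodule.mem_comap, LinearMap.mulRight_apply]
  simp only [mul_assoc]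
  rw [hEKh, mul_smul_comm, mul_smul_comm, mul_smul_comm]
  exact Submodule.smul_mem _ _ hmono

theorem eIdem_mem_rightStabilizer (i j : ℕ) : eIdem k n q i j ∈ rightStabilizer (pbw k n q) := by
  have hK := h.K_mem_rightStabilizer
  have hKh := h.Kh_mem_rightStabilizer
  refine mul_mem (Subalgebra.smul_mem _ (sum_mem fun t _ ↦ Subalgebra.smul_mem _
    (pow_mem (mul_mem (pow_mem hK _) hKh) t) _) _) ?_
  rw [oneJ]
  split
  · exact Subalgebra.smul_mem _ (add_mem (one_mem _) (mul_mem hK (pow_mem hKh _))) _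
  · exact Subalgebra.smul_mem _ (sub_mem (one_mem _) (mul_mem hK (pow_mem hKh _))) _

theorem idemMonomial_mem_pbw (i j : ℕ) {a : ℕ} (ha : a ≤ n ^ 2 - 2) (b : ℕ) :
    idemMonomial n q i j a b ∈ pbw k n q := by
  rw [idemMonomial, ← mul_assoc]
  refine h.eIdem_mem_rightStabilizer i j ?_
  simpa using h.monomial_mem_pbw ha b 0 0

end Admissible

end PbwStability

section AlphaGamma

variable {k : Type} [Field k] {n : ℕ} {q : k} {i j : ℕ}

theorem alpha_eq_idemMonomial : alpha k n q i j = idemMonomial n q i j (n ^ 2 - 1) 0 := by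
  rw [alpha, idemMonomial, pow_zero, one_mul]

namespace Admissible

variable (h : Admissible n q)
include h

theorem pbwE_apply_last (l : k) (hN : n ^ 2 - 1 < n ^ 2) {b : ℕ} (hb : b + 1 < n ^ 2)
    (z : PbwSpace k n) : pbwE n q l z (⟨n ^ 2 - 1, hN⟩, ⟨b + 1, hb⟩) =
      q ^ (n ^ 2 - 1) * z (⟨n ^ 2 - 1, hN⟩, ⟨b, by lia⟩) := by
  suffices Finsupp.lapply (⟨n ^ 2 - 1, hN⟩, ⟨b + 1, hb⟩) ∘ₗ pbwE n q l =
      q ^ (n ^ 2 - 1) • (Finsupp.lapply (⟨n ^ 2 - 1, hN⟩, ⟨b, by lia⟩) : PbwSpace k n →ₗ[k] k) from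
    LinearMap.congr_fun this z
  refine pbwSpace_hom_ext fun a' b' ↦ ?_
  rw [LinearMap.comp_apply, pbwE_pbwVec h, LinearMap.smul_apply, Finsupp.lapply_apply,
    Finsupp.lapply_apply, Finsupp.add_apply, Finsupp.smul_apply, Finsupp.smul_apply, pbwVec_apply,
    pbwVec_apply, pbwVec_apply]
  by_cases ha : a' = n ^ 2
  · rw [ha, raiseCoeff, gauss_eq_zero h.two_le_sq h.primitive, mul_zero, zero_mul, neg_zero,
      zero_smul, add_zero, if_neg (fun hab ↦ hN.ne' hab.1), if_neg (fun hab ↦ hN.ne' hab.1),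
      smul_zero, smul_zero]
  · rw [if_neg (by grind : ¬(a' - 1 = n ^ 2 - 1 ∧ b' = b + 1)), smul_zero, add_zero]
    by_cases hab : a' = n ^ 2 - 1 ∧ b' = b
    · rw [if_pos (by grind), if_pos hab, hab.1]
    · rw [if_neg (by grind), if_neg hab, smul_zero, smul_zero]

theorem E_pow_smul_alpha_ne_zero (hj : j ≤ 1) : E k n q ^ (n ^ 2 - 1) • alpha k n q i j ≠ 0 := by
  have hn := h.two_le_sq
  intro h0
  have coord_ne_zero (s : ℕ) (hs : s < n ^ 2) :
      ((pbwE n q ((q ^ 2) ^ i) ^ s) (pbwVec k n (n ^ 2 - 1) 0))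
        (⟨n ^ 2 - 1, by lia⟩, ⟨s, hs⟩) ≠ 0 := by
    induction s with
    | zero => simp [pbwVec_apply]
    | succ s ih =>
      rw [pow_succ' (pbwE n q _), Module.End.mul_apply, h.pbwE_apply_last]
      exact mul_ne_zero (pow_ne_zero _ h.ne_zero) (ih (by lia))
  refine coord_ne_zero (n ^ 2 - 1) (by lia) ?_
  have himage := congrArg (fun u ↦ h.idemRep i j u (pbwVec k n 0 0)) h0
  rw [smul_eq_mul, map_mul, Module.End.mul_apply, alpha_eq_idemMonomial,
    h.idemRep_idemMonomial i hj, map_pow, idemRep, pbwRep_E, map_zero,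
    LinearMap.zero_apply] at himage
  rw [himage, Finsupp.zero_apply]

theorem E_pow_mul_alpha_mem_span {s : ℕ} (hj : j ≤ 1) (hs : s ≤ n ^ 2 - 2) :
    E k n q ^ s * alpha k n q i j ∈ Submodule.span k
      {y | ∃ m ≤ s, idemMonomial n q i j (n ^ 2 - 1 - m) (s - m) = y} := by
  have hn := h.two_le_sq
  induction s with
  | zero => exact Submodule.subset_span ⟨0, le_rfl, by
      rw [alpha_eq_idemMonomial, pow_zero, one_mul, Nat.sub_zero, Nat.sub_zero]⟩
  | succ s ih =>
    rw [pow_succ' (E k n q) s, mul_assoc]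
    suffices Submodule.span k {y | ∃ m ≤ s, idemMonomial n q i j (n ^ 2 - 1 - m) (s - m) = y} ≤
        (Submodule.span k {y | ∃ m ≤ s + 1, idemMonomial n q i j (n ^ 2 - 1 - m) (s + 1 - m) = y}
          ).comap (LinearMap.mulLeft k (E k n q)) from this (ih (by lia))
    refine Submodule.span_le.mpr ?_
    rintro _ ⟨m, hm, rfl⟩
    obtain ⟨a, ha⟩ : ∃ a, n ^ 2 - 1 - m = a + 1 := ⟨n ^ 2 - 2 - m, by lia⟩
    have hweight := (mem_weightSpace.mp
      (h.E_pow_smul_mem_weightSpace (h.eIdem_mem_weightSpace i hj) (s - m))).1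
    have hmul : E k n q * idemMonomial n q i j (a + 1) (s - m) =
        q ^ (a + 1) • idemMonomial n q i j (a + 1) (s - m + 1) +
          raiseCoeff q ((q⁻¹ ^ 2) ^ (s - m) * (q ^ 2) ^ i) (a + 1) •
            idemMonomial n q i j a (s - m) := by
      simp only [smul_eq_mul] at hweight
      rw [idemMonomial, ← mul_assoc,
        mul_pow_succ_of_skew_add (E_mul_F h.ne_zero) h.weightElt_mul_F a, raiseCoeff,
        Nat.add_sub_cancel]
      simp only [add_mul, sub_mul, smul_mul_assoc, mul_assoc, hweight, mul_smul_comm]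
      rw [← mul_assoc (E k n q), ← pow_succ' (E k n q)]
      simp only [idemMonomial]
      module
    rw [SetLike.mem_coe, Submodule.mem_comap, LinearMap.mulLeft_apply, ha, hmul]
    exact Submodule.add_mem _
      (Submodule.smul_mem _ _ (Submodule.subset_span ⟨m, by lia, by grind⟩))
      (Submodule.smul_mem _ _ (Submodule.subset_span ⟨m + 1, by lia, by grind⟩))

theorem weight_idemMonomial {m : ℕ} (hi' : i ≤ n ^ 2 / 2) (hm : m + 2 ≤ 2 * i) :
    (q ^ 2) ^ (n ^ 2 - 2 - m) * ((q⁻¹ ^ 2) ^ (2 * i - 2 - m) * (q ^ 2) ^ i) =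
      q⁻¹ * q ^ (n ^ 2 - 2 * i + 1) := by
  obtain ⟨b, hb⟩ : ∃ b, 2 * i = m + 2 + b := ⟨2 * i - 2 - m, by lia⟩
  obtain ⟨c, hc⟩ : ∃ c, n ^ 2 = 2 * i + c := ⟨n ^ 2 - 2 * i, by lia⟩
  have hqb : (q⁻¹ ^ 2) ^ b * (q ^ 2) ^ b = 1 := by
    rw [← mul_pow, ← mul_pow, inv_mul_cancel₀ h.ne_zero, one_pow, one_pow]
  have hexp : (q ^ 2) ^ (n ^ 2 - 2 - m) * (q ^ 2) ^ i = (q ^ 2) ^ b * q ^ c := by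
    rw [← pow_mul, ← pow_mul, ← pow_mul, ← pow_add, ← pow_add,
      show 2 * (n ^ 2 - 2 - m) + 2 * i = n ^ 2 + (2 * b + c) by lia, pow_add,
      h.primitive.pow_eq_one, one_mul]
  rw [show 2 * i - 2 - m = b by lia, show n ^ 2 - 2 * i = c by lia, mul_left_comm, hexp,
    ← mul_assoc, hqb, one_mul, pow_succ', inv_mul_cancel_left₀ h.ne_zero]

theorem exists_F_mul_eq_beta (hi : 1 ≤ i) (hi' : i ≤ n ^ 2 / 2) (hj : j ≤ 1) :
    ∃ y ∈ pbw k n q ⊓ weightSpace n q (U k n q) (q⁻¹ * q ^ (n ^ 2 - 2 * i + 1)) ((-1) ^ j),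
      F k n q * y = beta k n q i j := by
  have hn := h.two_le_sq
  suffices Submodule.span k
      {y | ∃ m ≤ 2 * i - 2, idemMonomial n q i j (n ^ 2 - 1 - m) (2 * i - 2 - m) = y} ≤
      (pbw k n q ⊓ weightSpace n q (U k n q) (q⁻¹ * q ^ (n ^ 2 - 2 * i + 1)) ((-1) ^ j)).map
        (LinearMap.mulLeft k (F k n q)) from
    this (h.E_pow_mul_alpha_mem_span hj (by lia))
  refine Submodule.span_le.mpr ?_
  rintro _ ⟨m, hm, rfl⟩
  refine ⟨idemMonomial n q i j (n ^ 2 - 2 - m) (2 * i - 2 - m),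
    ⟨h.idemMonomial_mem_pbw i j (by lia) _, ?_⟩, ?_⟩
  · have hsign : (-1 : k) ^ (n ^ 2 - 2 - m) * ((-1) ^ (2 * i - 2 - m) * (-1) ^ j) = (-1) ^ j := by
      have heven : Even (n ^ 2 - 2 - m + (2 * i - 2 - m)) := by
        obtain ⟨c, hc⟩ := h.two_dvd_sq
        exact ⟨c + i - 2 - m, by lia⟩
      rw [← mul_assoc, ← pow_add, heven.neg_one_pow, one_mul]
    have hmem := h.idemMonomial_mem_weightSpace i hj (n ^ 2 - 2 - m) (2 * i - 2 - m)
    rwa [h.weight_idemMonomial hi' (by lia), hsign] at hmem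
  · rw [LinearMap.mulLeft_apply, idemMonomial, ← mul_assoc, ← pow_succ',
      show n ^ 2 - 2 - m + 1 = n ^ 2 - 1 - m by lia, idemMonomial]

theorem F_mul_gam_and_gam_mem_weightSpace (hi : 1 ≤ i) (hi' : i ≤ n ^ 2 / 2) (hj : j ≤ 1) :
    F k n q * gam k n q i j = beta k n q i j ∧ gam k n q i j ∈
      weightSpace n q (U k n q) (q⁻¹ * q ^ (n ^ 2 - 2 * i + 1)) ((-1) ^ j) := by
  obtain ⟨y, ⟨hy, hweight⟩, hF⟩ := h.exists_F_mul_eq_beta hi hi' hj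
  have hex : ∃! x, x ∈ pbw k n q ∧ F k n q * x = beta k n q i j :=
    ⟨y, ⟨hy, hF⟩, fun x ⟨hx, hFx⟩ ↦ sub_eq_zero.mp <|
      h.eq_zero_of_F_mul_eq_zero (Submodule.sub_mem _ hx hy) (by rw [mul_sub, hF, hFx, sub_self])⟩
  have hgam : gam k n q i j = y := by
    rw [gam, dif_pos hex]
    exact hex.unique hex.choose_spec.1 ⟨hy, hF⟩
  rw [hgam]
  exact ⟨hF, hweight⟩

theorem isLowest_alpha (hi : 1 ≤ i) (hj : j ≤ 1) :
    IsLowest n q (2 * i - 1) ((-1) ^ (j + 1)) (alpha k n q i j) where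
  F_smul := by
    rw [smul_eq_mul, alpha, ← mul_assoc, ← pow_succ',
      Nat.sub_add_cancel (Nat.one_le_of_lt h.two_le_sq), F_pow_sq, zero_mul]
  mem_weightSpace := by
    have hn := h.two_le_sq
    have hweight : (q ^ 2) ^ (n ^ 2 - 1) * (q ^ 2) ^ i = q⁻¹ * q ^ (2 * i - 1) := by
      rw [eq_inv_mul_iff_mul_eq₀ h.ne_zero, ← pow_mul, ← pow_mul, ← pow_add, ← pow_succ',
        show 2 * (n ^ 2 - 1) + 2 * i + 1 = n ^ 2 + (n ^ 2 + (2 * i - 1)) by lia, pow_add, pow_add,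
        h.primitive.pow_eq_one, one_mul, one_mul]
    have hsign : (-1 : k) ^ (n ^ 2 - 1) * (-1) ^ j = (-1) ^ (j + 1) := by
      have hodd : Odd (n ^ 2 - 1) := by
        obtain ⟨c, hc⟩ := h.two_dvd_sq
        exact ⟨c - 1, by lia⟩
      rw [hodd.neg_one_pow, pow_succ']
    rw [← hweight, ← hsign]
    exact h.F_pow_smul_mem_weightSpace (h.eIdem_mem_weightSpace i hj) _

end Admissible

end AlphaGamma

/-! ### The socle of `P_{2i,j}` -/

theorem sSup_simple_eq_span_singleton {R M : Type*} [Ring R] [AddCommGroup M] [Module R M]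
    {N : Submodule R M} {t : M} (ht0 : t ≠ 0) (ht : t ∈ N)
    (h : ∀ x ∈ N, x ≠ 0 → t ∈ Submodule.span R {x}) :
    sSup {L : Submodule R M | L ≤ N ∧ IsSimpleModule R L} = Submodule.span R {t} := by
  have hle (L : Submodule R M) (hL : L ≤ N) (hL0 : L ≠ ⊥) : Submodule.span R {t} ≤ L := by
    obtain ⟨x, hx, hx0⟩ := Submodule.exists_mem_ne_zero_of_ne_bot hL0
    rw [Submodule.span_singleton_le_iff_mem]
    exact (Submodule.span_singleton_le_iff_mem x L).mpr hx (h x (hL hx) hx0)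
  have htN : Submodule.span R {t} ≤ N := (Submodule.span_singleton_le_iff_mem t N).mpr ht
  have hbot : Submodule.span R {t} ≠ ⊥ := Submodule.span_singleton_eq_bot.not.mpr ht0
  refine le_antisymm (sSup_le fun L ⟨hL, hsimple⟩ ↦ ?_) (le_sSup ⟨htN, ?_⟩)
  · rw [isSimpleModule_iff_isAtom] at hsimple
    exact ((hsimple.le_iff.mp (hle L hL hsimple.1)).resolve_left hbot).ge
  · rw [isSimpleModule_iff_isAtom]
    refine ⟨hbot, fun L hL ↦ not_not.mp fun hL0 ↦ ?_⟩
    exact hL.not_ge (hle L (hL.le.trans htN) hL0)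

section LinkedPair

theorem E_pow_sq_smul {k : Type} [Field k] {n : ℕ} {q : k} {X : Type*} [AddCommGroup X]
    [Module (U k n q) X] (v : X) : E k n q ^ n ^ 2 • v = 0 := by rw [E_pow_sq, zero_smul]

variable {k : Type} [Field k] {n : ℕ} {q : k} {X : Type*} [AddCommGroup X] [Module k X]
  [Module (U k n q) X] [IsScalarTower k (U k n q) X]

variable (n q) in
/-- A lowest weight vector `a` with an `E`-string of length `n²` together with a vector `c` which
`F` sends to `E^(d₀-1) a`, as for `α_{2i,j}` and `γ_{2i,j}`. The two `E`-strings then span the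
submodule generated by `c`. -/
structure LinkedPair (d₀ d : ℕ) (ε ε' : k) (a c : X) : Prop where
  isLowest : IsLowest n q d₀ ε a
  E_pow_smul_ne_zero : E k n q ^ (n ^ 2 - 1) • a ≠ 0
  F_smul : F k n q • c = E k n q ^ (d₀ - 1) • a
  mem_weightSpace : c ∈ weightSpace n q X (q⁻¹ * q ^ d) ε'
  left_pos : 0 < d₀
  right_pos : 0 < d
  add_eq : d₀ + d = n ^ 2

theorem pow_pred_smul_mem_span_of_mem_powSpan {a y : X} (hy : y ∈ powSpan k (E k n q) a)
    (hy0 : y ≠ 0) : E k n q ^ (n ^ 2 - 1) • a ∈ Submodule.span (U k n q) {y} := by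
  obtain ⟨m, κ, hκ, h⟩ := exists_pow_smul_eq_smul_pow_pred_smul (E_pow_sq_smul a) hy hy0
  rw [← inv_smul_eq_iff₀ hκ] at h
  rw [← h]
  exact Submodule.smul_of_tower_mem _ _
    (Submodule.smul_mem _ _ (Submodule.mem_span_singleton_self y))

namespace LinkedPair

variable {d₀ d : ℕ} {ε ε' : k} {a c : X} (hac : LinkedPair n q d₀ d ε ε' a c)
  (h : Admissible n q)
include hac h

theorem F_smul_E_pow_smul (s : ℕ) : F k n q • E k n q ^ s • c =
    q⁻¹ ^ s • E k n q ^ (s + (d₀ - 1)) • a + lowerCoeff q d s • E k n q ^ (s - 1) • c := by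
  rw [h.F_smul_E_pow_smul hac.mem_weightSpace, hac.F_smul, ← mul_smul (E k n q ^ s), ← pow_add]

theorem smul_pow_pred_add_F_smul_ne_zero {y : X} (hy : y ∈ powSpan k (E k n q) a) {κ : k}
    (hκ : κ ≠ 0) : κ • E k n q ^ (n ^ 2 - 1) • a + F k n q • y ≠ 0 := by
  intro h0
  obtain ⟨f, rfl⟩ := exists_eq_sum_pow_smul (E_pow_sq_smul a) hy
  obtain ⟨m, hm⟩ : ∃ m, n ^ 2 = m + 1 := ⟨n ^ 2 - 1, by have := h.two_le_sq; lia⟩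
  have hsum : ∑ s ∈ Finset.range (m + 1),
      (if s = m then κ else f (s + 1) * lowerCoeff q d₀ (s + 1)) • E k n q ^ s • a = 0 := by
    rw [hm, hac.isLowest.F_smul_sum_E_pow_smul h, Nat.add_sub_cancel] at h0
    rw [Finset.sum_range_succ, if_pos rfl, add_comm, ← h0]
    congr 1
    exact Finset.sum_congr rfl fun s hs ↦ by rw [if_neg (Finset.mem_range.mp hs).ne]
  have hcoeff := coeff_eq_zero_of_sum_pow_smul_eq_zero (E_pow_sq_smul a) hac.E_pow_smul_ne_zero
    hm.ge hsum m m.lt_succ_self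
  exact hκ (by rwa [if_pos rfl] at hcoeff)

/-- Repeated application of `F` moves down the string of `c` until the structure constant vanishes,
at the bottom of the simple quotient, where the next step enters the string of `a`. -/
theorem pow_pred_smul_mem_span_smul_add {s : ℕ} (hs : d ≤ s) (hsn : s < n ^ 2) :
    ∀ {κ : k} {y : X}, κ ≠ 0 → y ∈ powSpan k (E k n q) a →
      E k n q ^ (n ^ 2 - 1) • a ∈ Submodule.span (U k n q) {κ • E k n q ^ s • c + y} := by
  have hd := hac.right_pos
  have hd₀ := hac.left_pos
  have hadd := hac.add_eq
  have of_F {x : X}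
      (hx : E k n q ^ (n ^ 2 - 1) • a ∈ Submodule.span (U k n q) {F k n q • x}) :
      E k n q ^ (n ^ 2 - 1) • a ∈ Submodule.span (U k n q) {x} :=
    Submodule.span_singleton_le_iff_mem _ _ |>.mpr
      (Submodule.smul_mem _ _ (Submodule.mem_span_singleton_self x)) hx
  induction s, hs using Nat.le_induction with
  | base =>
    intro κ y hκ hy
    have hFx : F k n q • (κ • E k n q ^ d • c + y) =
        (κ * q⁻¹ ^ d) • E k n q ^ (n ^ 2 - 1) • a + F k n q • y := by
      rw [smul_add, smul_comm, hac.F_smul_E_pow_smul h, h.lowerCoeff_self, zero_smul, add_zero,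
        smul_smul, show d + (d₀ - 1) = n ^ 2 - 1 by lia]
    refine of_F (pow_pred_smul_mem_span_of_mem_powSpan ?_ ?_) <;> rw [hFx]
    · exact Submodule.add_mem _ (Submodule.smul_mem _ _ (pow_smul_mem_powSpan _))
        (hac.isLowest.smul_mem_powSpan h _ hy)
    · exact hac.smul_pow_pred_add_F_smul_ne_zero h hy
        (mul_ne_zero hκ (pow_ne_zero _ (inv_ne_zero h.ne_zero)))
  | succ s hs ih =>
    intro κ y hκ hy
    have hFx : F k n q • (κ • E k n q ^ (s + 1) • c + y) =
        (κ * lowerCoeff q d (s + 1)) • E k n q ^ s • c +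
          ((κ * q⁻¹ ^ (s + 1)) • E k n q ^ (s + 1 + (d₀ - 1)) • a + F k n q • y) := by
      rw [smul_add, smul_comm, hac.F_smul_E_pow_smul h, Nat.add_sub_cancel, smul_add, smul_smul,
        smul_smul]
      abel
    refine of_F ?_
    rw [hFx]
    exact ih (by lia)
      (mul_ne_zero hκ (h.lowerCoeff_ne_zero s.succ_ne_zero hsn (by lia) (by lia)))
      (Submodule.add_mem _ (Submodule.smul_mem _ _ (pow_smul_mem_powSpan _))
        (hac.isLowest.smul_mem_powSpan h _ hy))

theorem smul_mem_powSpan_sup (u : U k n q) :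
    ∀ x ∈ powSpan k (E k n q) a ⊔ powSpan k (E k n q) c,
      u • x ∈ powSpan k (E k n q) a ⊔ powSpan k (E k n q) c := by
  have of_string (u : U k n q) (hu : ∀ s, u • E k n q ^ s • c ∈
      powSpan k (E k n q) a ⊔ powSpan k (E k n q) c) :
      ∀ x ∈ powSpan k (E k n q) a ⊔ powSpan k (E k n q) c,
        u • x ∈ powSpan k (E k n q) a ⊔ powSpan k (E k n q) c := by
    refine fun x hx ↦ (sup_le (fun y hy ↦ ?_) (Submodule.span_le.mpr ?_) :
      powSpan k (E k n q) a ⊔ powSpan k (E k n q) c ≤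
        (powSpan k (E k n q) a ⊔ powSpan k (E k n q) c).comap (Algebra.lsmul k k X u)) hx
    · exact Submodule.mem_sup_left (hac.isLowest.smul_mem_powSpan h u hy)
    · rintro _ ⟨s, rfl⟩
      exact hu s
  have mem_right (s : ℕ) : E k n q ^ s • c ∈ powSpan k (E k n q) a ⊔ powSpan k (E k n q) c :=
    Submodule.mem_sup_right (pow_smul_mem_powSpan s)
  have hweight (s : ℕ) := h.E_pow_smul_mem_weightSpace hac.mem_weightSpace s
  refine smul_mem_of_generators (of_string _ fun s ↦ ?_) (of_string _ fun s ↦ ?_)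
    (of_string _ fun s ↦ ?_) (of_string _ fun s ↦ ?_) u
  · rw [h.K_smul_of_mem_weightSpace (hweight s)]
    exact Submodule.smul_mem _ _ (mem_right s)
  · rw [h.Kh_smul_of_mem_weightSpace (hweight s)]
    exact Submodule.smul_mem _ _ (mem_right s)
  · rw [← mul_smul, ← pow_succ']
    exact mem_right _
  · rw [hac.F_smul_E_pow_smul h]
    exact Submodule.add_mem _
      (Submodule.mem_sup_left (Submodule.smul_mem _ _ (pow_smul_mem_powSpan _)))
      (Submodule.smul_mem _ _ (mem_right _))

theorem pow_pred_smul_mem_span_of_ne_zero {x : X} (hx : x ∈ Submodule.span (U k n q) {c})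
    (hx0 : x ≠ 0) : E k n q ^ (n ^ 2 - 1) • a ∈ Submodule.span (U k n q) {x} := by
  obtain ⟨u, rfl⟩ := Submodule.mem_span_singleton.mp hx
  obtain ⟨y, hy, z, hz, hyz⟩ := Submodule.mem_sup.mp
    (hac.smul_mem_powSpan_sup h u c (Submodule.mem_sup_right self_mem_powSpan))
  rw [← hyz] at hx0 ⊢
  by_cases hz0 : z = 0
  · rw [hz0, add_zero] at hx0 ⊢
    exact pow_pred_smul_mem_span_of_mem_powSpan hy hx0
  · obtain ⟨m, κ, hκ, hm⟩ := exists_pow_smul_eq_smul_pow_pred_smul (E_pow_sq_smul c) hz hz0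
    have htop := hac.pow_pred_smul_mem_span_smul_add h (s := n ^ 2 - 1)
      (by have := hac.add_eq; have := hac.left_pos; lia) (by have := h.two_le_sq; lia) hκ
      (hac.isLowest.smul_mem_powSpan h (E k n q ^ m) hy)
    rw [← hm, ← smul_add, add_comm z] at htop
    exact (Submodule.span_singleton_le_iff_mem _ _).mpr
      (Submodule.smul_mem _ _ (Submodule.mem_span_singleton_self _)) htop

theorem sSup_simple_eq_span : sSup {N : Submodule (U k n q) X |
    N ≤ Submodule.span (U k n q) {c} ∧ IsSimpleModule (U k n q) N} =
      Submodule.span (U k n q) {E k n q ^ (n ^ 2 - 1) • a} := by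
  have hc : c ≠ 0 := by
    rintro rfl
    refine hac.E_pow_smul_ne_zero (pow_smul_eq_zero_of_le (d := d₀ - 1) ?_ ?_)
    · rw [← hac.F_smul, smul_zero]
    · have := hac.add_eq
      lia
  exact sSup_simple_eq_span_singleton hac.E_pow_smul_ne_zero
    (hac.pow_pred_smul_mem_span_of_ne_zero h (Submodule.mem_span_singleton_self c) hc)
    fun x hx hx0 ↦ hac.pow_pred_smul_mem_span_of_ne_zero h hx hx0

theorem span_pow_pred_eq_span_pow : Submodule.span (U k n q) {E k n q ^ (n ^ 2 - 1) • a} =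
    Submodule.span (U k n q) {E k n q ^ d₀ • a} := by
  have hd := hac.right_pos
  have hadd := hac.add_eq
  refine le_antisymm ?_ ?_ <;> rw [Submodule.span_singleton_le_iff_mem]
  · rw [← Nat.sub_add_cancel (by lia : d₀ ≤ n ^ 2 - 1), pow_add, mul_smul]
    exact Submodule.smul_mem _ _ (Submodule.mem_span_singleton_self _)
  · refine Nat.decreasingInduction' (P := fun s ↦ E k n q ^ s • a ∈
      Submodule.span (U k n q) {E k n q ^ (n ^ 2 - 1) • a}) (fun s hs hds ih ↦ ?_)
      (by lia : d₀ ≤ n ^ 2 - 1) (Submodule.mem_span_singleton_self _)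
    have hF := Submodule.smul_mem _ (F k n q) ih
    rw [hac.isLowest.F_smul_E_pow_smul h, Nat.add_sub_cancel] at hF
    have hne : lowerCoeff q d₀ (s + 1) ≠ 0 :=
      h.lowerCoeff_ne_zero s.succ_ne_zero (by lia) (by lia) (by lia)
    simpa only [smul_smul, inv_mul_cancel₀ hne, one_smul] using
      Submodule.smul_of_tower_mem _ (lowerCoeff q d₀ (s + 1))⁻¹ hF

theorem isLowestString_E_pow_smul :
    IsLowestString n q d ((-1) ^ d₀ * ε) (E k n q ^ d₀ • a) where
  F_smul := by
    rw [hac.isLowest.F_smul_E_pow_smul h, h.lowerCoeff_self, zero_smul]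
  mem_weightSpace := by
    have hd : q ^ d = q⁻¹ ^ d₀ := by
      rw [inv_pow]
      exact eq_inv_of_mul_eq_one_left
        (by rw [← pow_add, add_comm, hac.add_eq, h.primitive.pow_eq_one])
    have hweight : (q⁻¹ ^ 2) ^ d₀ * (q⁻¹ * q ^ d₀) = q⁻¹ * q ^ d := by
      have hinv : q⁻¹ ^ d₀ * q ^ d₀ = 1 := by
        rw [← mul_pow, inv_mul_cancel₀ h.ne_zero, one_pow]
      rw [hd, ← pow_mul, mul_comm 2, pow_mul]
      linear_combination (q⁻¹ ^ d₀ * q⁻¹) * hinv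
    rw [← hweight]
    exact hac.isLowest.E_pow_smul_mem_weightSpace h d₀
  E_pow_smul := by rw [← mul_smul, ← pow_add, add_comm, hac.add_eq, E_pow_sq_smul]
  E_pow_pred_smul := by
    rw [← mul_smul, ← pow_add, ← Nat.sub_add_comm hac.right_pos, add_comm, hac.add_eq]
    exact hac.E_pow_smul_ne_zero
  pos := hac.right_pos
  le_sq := by rw [← hac.add_eq]; exact Nat.le_add_left d d₀

end LinkedPair

end LinkedPair

section Submodules

variable {k : Type} [Field k] {n : ℕ} {q : k} {X : Type*} [AddCommGroup X] [Module k X]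
  [Module (U k n q) X] [IsScalarTower k (U k n q) X]

theorem IsLowestString.exists_powSpan_eq_top_of_eq_span {d : ℕ} {ε : k} {v : X}
    (hv : IsLowestString n q d ε v) (h : Admissible n q) {N : Submodule (U k n q) X}
    (hN : N = Submodule.span (U k n q) {v}) :
    ∃ w : N, IsLowestString n q d ε w ∧ powSpan k (E k n q) w = ⊤ := by
  subst hN
  obtain ⟨hg, hz⟩ := QFL.mem_weightSpace.mp hv.mem_weightSpace
  let w : Submodule.span (U k n q) {v} := ⟨v, Submodule.mem_span_singleton_self v⟩
  have hw : IsLowestString n q d ε w :=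
    ⟨⟨Subtype.ext hv.F_smul, QFL.mem_weightSpace.mpr ⟨Subtype.ext hg, Subtype.ext hz⟩⟩,
      Subtype.ext hv.E_pow_smul, fun h0 ↦ hv.E_pow_pred_smul (congrArg Subtype.val h0), hv.pos,
      hv.le_sq⟩
  refine ⟨w, hw, eq_top_iff.mpr ?_⟩
  rintro ⟨x, hx⟩ -
  obtain ⟨u, rfl⟩ := Submodule.mem_span_singleton.mp hx
  exact hw.smul_mem_powSpan h u self_mem_powSpan

theorem Admissible.exists_isLowestString_S {i j : ℕ} (h : Admissible n q) (hi : 1 ≤ i)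
    (hi' : i ≤ n ^ 2 / 2) (hj : j ≤ 1) : ∃ v : S k n q i j,
      IsLowestString n q (n ^ 2 - 2 * i + 1) ((-1) ^ j) v ∧ powSpan k (E k n q) v = ⊤ := by
  obtain ⟨hF, hweight⟩ := h.F_mul_gam_and_gam_mem_weightSpace hi hi' hj
  have hac : LinkedPair n q (2 * i - 1) (n ^ 2 - 2 * i + 1) ((-1) ^ (j + 1)) ((-1) ^ j)
      (alpha k n q i j) (gam k n q i j) :=
    { isLowest := h.isLowest_alpha hi hj
      E_pow_smul_ne_zero := h.E_pow_smul_alpha_ne_zero hj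
      F_smul := hF
      mem_weightSpace := hweight
      left_pos := by lia
      right_pos := by lia
      add_eq := by lia }
  have hsign : (-1 : k) ^ (2 * i - 1) * (-1) ^ (j + 1) = (-1) ^ j := by
    rw [← pow_add, show 2 * i - 1 + (j + 1) = 2 * i + j by lia, pow_add, pow_mul, neg_one_sq,
      one_pow, one_mul]
  rw [← hsign]
  exact (hac.isLowestString_E_pow_smul h).exists_powSpan_eq_top_of_eq_span h
    ((hac.sSup_simple_eq_span h).trans (hac.span_pow_pred_eq_span_pow h))

end Submodules

/-! ### Semisimple modules with lowest weight vectors of distinct lengths -/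

theorem injective_of_isNilpotent_smul {R M N : Type*} [Ring R] [AddCommGroup M] [AddCommGroup N]
    [Module R M] [Module R N] {f : M →ₗ[R] N} {a : R} (ha : IsNilpotent a)
    (hf : ∀ x, a • x = 0 → f x = 0 → x = 0) : Function.Injective f := by
  obtain ⟨m, hm⟩ := ha
  have of_pow (s : ℕ) : ∀ x, a ^ s • x = 0 → f x = 0 → x = 0 := by
    induction s with
    | zero => exact fun x hx _ ↦ by rwa [pow_zero, one_smul] at hx
    | succ s ih =>
      refine fun x hx hfx ↦ hf x (ih _ ?_ (by rw [map_smul, hfx, smul_zero])) hfx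
      rw [← mul_smul, ← pow_succ, hx]
  exact (injective_iff_map_eq_zero f).mpr fun x ↦ of_pow m x (by rw [hm, zero_smul])

section Semisimple

variable {k : Type} [Field k] {n : ℕ} {q : k} {ι : Type*} {d : ι → ℕ} {ε : ι → k}
  {T : Type*} [AddCommGroup T] [Module k T] [Module (U k n q) T] [IsScalarTower k (U k n q) T]
  {w : ι → T}

theorem IsLowest.linearIndependent (h : Admissible n q) (hd0 : ∀ i, 0 < d i)
    (hdn : ∀ i, d i ≤ n ^ 2) (hd : Function.Injective d)
    (hw : ∀ i, IsLowest n q (d i) (ε i) (w i)) (hw0 : ∀ i, w i ≠ 0) : LinearIndependent k w := by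
  refine Module.End.eigenvectors_linearIndependent' (Algebra.lsmul k k T (weightElt k n q))
    (fun i ↦ q⁻¹ * q ^ d i) (fun i i' hii' ↦ hd ?_) w fun i ↦
    ⟨Module.End.mem_eigenspace_iff.mpr (QFL.mem_weightSpace.mp (hw i).mem_weightSpace).1, hw0 i⟩
  obtain ⟨m, hm⟩ := Nat.exists_eq_succ_of_ne_zero (hd0 i).ne'
  obtain ⟨m', hm'⟩ := Nat.exists_eq_succ_of_ne_zero (hd0 i').ne'
  have hpow : q ^ m = q ^ m' := by
    simpa [hm, hm', pow_succ', ← mul_assoc, inv_mul_cancel₀ h.ne_zero] using hii'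
  have := hdn i
  have := hdn i'
  rw [hm, hm', h.primitive.pow_inj (by lia) (by lia) hpow]

open DirectSum in
theorem nonempty_linearEquiv_directSum [Fintype ι] [Module.Finite k T] (h : Admissible n q)
    (hd : Function.Injective d) {Z : ι → Type*} [∀ i, AddCommGroup (Z i)] [∀ i, Module k (Z i)]
    [∀ i, Module (U k n q) (Z i)] [∀ i, IsScalarTower k (U k n q) (Z i)]
    (hZ : ∀ i, ∃ v : Z i, IsLowestString n q (d i) (ε i) v ∧ powSpan k (E k n q) v = ⊤)
    (hw : ∀ i, IsLowest n q (d i) (ε i) (w i)) (hw0 : ∀ i, w i ≠ 0)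
    (hE : ∀ i, E k n q ^ d i • w i = 0) (hrank : Module.finrank k T = ∑ i, d i) :
    Nonempty (T ≃ₗ[U k n q] ⨁ i, Z i) := by
  classical
  choose v hv htop using hZ
  choose f hf using fun i ↦ (hv i).exists_linearMap h (htop i) (hw i) (hE i)
  choose b _ using fun i ↦ exists_basis_pow_smul (hv i).E_pow_smul (hv i).E_pow_pred_smul (htop i)
  have (i : ι) : Module.Finite k (Z i) := .of_basis (b i)
  have hindep := IsLowest.linearIndependent h (fun i ↦ (hv i).pos) (fun i ↦ (hv i).le_sq) hd hw hw0
  let Φ : (⨁ i, Z i) →ₗ[U k n q] T := toModule (U k n q) ι T f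
  have hΦ (y : ⨁ i, Z i) : Φ y = ∑ i, f i (y i) := by
    conv_lhs => rw [← sum_univ_of y, map_sum]
    exact Finset.sum_congr rfl fun i _ ↦ toModule_lof (U k n q) i (y i)
  have hinj : Function.Injective Φ := by
    refine injective_of_isNilpotent_smul ⟨n ^ 2, F_pow_sq⟩ fun y hFy hy ↦ ?_
    choose c hc using fun i ↦ (hv i).eq_smul_of_F_smul_eq_zero h
      (htop i ▸ Submodule.mem_top : y i ∈ _) (congrArg (· i) hFy)
    have hsum : ∑ i, c i • w i = 0 := by
      rw [← hy, hΦ]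
      exact Finset.sum_congr rfl fun i _ ↦ by rw [hc, LinearMap.map_smul_of_tower, hf]
    refine DFinsupp.ext fun i ↦ ?_
    rw [hc, Fintype.linearIndependent_iff.mp hindep c hsum i, zero_smul, DirectSum.zero_apply]
  have hfinrank : Module.finrank k (⨁ i, Z i) = Module.finrank k T := by
    rw [Module.finrank_directSum, hrank]
    exact Finset.sum_congr rfl fun i _ ↦ by
      rw [Module.finrank_eq_card_basis (b i), Fintype.card_fin]
  have hsurj : Function.Surjective Φ :=
    (LinearMap.injective_iff_surjective_of_finrank_eq_finrank (f := Φ.restrictScalars k)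
      hfinrank).mp hinj
  exact ⟨(LinearEquiv.ofBijective Φ ⟨hinj, hsurj⟩).symm⟩

end Semisimple

/-! ### Grids of weight vectors -/

section StringGrid

open Finset.HasAntidiagonal (antidiagonal mem_antidiagonal)

variable {k : Type} [Field k] {T : Type*} [AddCommGroup T] [Module k T] {b : ℕ → ℕ → T}

variable (k) in
/-- The part of total degree `p` of the module spanned by a grid `b`. -/
def gridDegree (b : ℕ → ℕ → T) (p : ℕ) : Submodule k T :=
  Submodule.span k ((fun st : ℕ × ℕ ↦ b st.1 st.2) '' ↑(antidiagonal p))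

theorem mem_gridDegree {s t p : ℕ} (hst : s + t = p) : b s t ∈ gridDegree k b p :=
  Submodule.subset_span ⟨(s, t), Finset.mem_coe.mpr (mem_antidiagonal.mpr hst), rfl⟩

theorem gridDegree_le_iff {p : ℕ} {N : Submodule k T} :
    gridDegree k b p ≤ N ↔ ∀ s t, s + t = p → b s t ∈ N := by
  refine ⟨fun h s t hst ↦ h (mem_gridDegree hst), fun h ↦ Submodule.span_le.mpr ?_⟩
  rintro _ ⟨⟨s, t⟩, hst, rfl⟩
  exact h s t (mem_antidiagonal.mp (Finset.mem_coe.mp hst))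

theorem exists_eq_sum_antidiagonal {p : ℕ} {x : T} (hx : x ∈ gridDegree k b p) :
    ∃ f : ℕ × ℕ → k, ∑ st ∈ antidiagonal p, f st • b st.1 st.2 = x :=
  (Submodule.mem_span_image_finset_iff_exists_fun' k).mp hx

variable {n : ℕ} {q : k} [Module (U k n q) T] [IsScalarTower k (U k n q) T] {d₁ d₂ : ℕ} {ε : k}

variable (n q) in
/-- `b s t`, for `s < d₁` and `t < d₂`, is a basis on which the generators act as on the vectors
`E^s v₁ ⊗ E^t v₂` of a tensor product of two strings of lengths `d₁` and `d₂`; the coefficients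
which depend on the comultiplication are left unspecified. As for strings, `b s t = 0` outside this
range. -/
structure StringGrid (d₁ d₂ : ℕ) (ε : k) (b : ℕ → ℕ → T) : Prop where
  add_le : d₁ + d₂ ≤ n ^ 2
  eq_zero : ∀ {s t}, d₁ ≤ s ∨ d₂ ≤ t → b s t = 0
  exists_basis : ∃ B : Module.Basis (Fin d₁ × Fin d₂) k T, ∀ s t, B (s, t) = b s t
  mem_weightSpace : ∀ s t, b s t ∈
    weightSpace n q T ((q⁻¹ ^ 2) ^ (s + t) * (q⁻¹ ^ 2 * q ^ (d₁ + d₂))) ((-1) ^ (s + t) * ε)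
  E_smul : ∀ s t, ∃ x y : k, E k n q • b s t = x • b (s + 1) t + y • b s (t + 1)
  F_smul : ∀ s t, ∃ x ≠ 0, ∃ y ≠ 0, F k n q • b s t =
    (x * lowerCoeff q d₁ s) • b (s - 1) t + (y * lowerCoeff q d₂ t) • b s (t - 1)

namespace StringGrid

variable (hb : StringGrid n q d₁ d₂ ε b)
include hb

theorem coeff_eq_zero_of_sum_antidiagonal_eq_zero {p : ℕ} {f : ℕ × ℕ → k}
    (hf : ∑ st ∈ antidiagonal p, f st • b st.1 st.2 = 0) {s t : ℕ} (hst : s + t = p)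
    (hs : s < d₁) (ht : t < d₂) : f (s, t) = 0 := by
  obtain ⟨B, hB⟩ := hb.exists_basis
  have coord_self : B.coord (⟨s, hs⟩, ⟨t, ht⟩) (b s t) = 1 := by
    rw [← hB ⟨s, hs⟩ ⟨t, ht⟩, B.coord_apply, B.repr_self, Finsupp.single_eq_same]
  have coord_of_ne (s' t' : ℕ) (hne : (s', t') ≠ (s, t)) :
      B.coord (⟨s, hs⟩, ⟨t, ht⟩) (b s' t') = 0 := by
    by_cases hout : d₁ ≤ s' ∨ d₂ ≤ t'
    · rw [hb.eq_zero hout, map_zero]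
    · obtain ⟨hs', ht'⟩ := not_or.mp hout
      rw [← hB ⟨s', not_le.mp hs'⟩ ⟨t', not_le.mp ht'⟩, B.coord_apply, B.repr_self,
        Finsupp.single_eq_of_ne]
      simpa [eq_comm] using hne
  have hcoord := congrArg (B.coord (⟨s, hs⟩, ⟨t, ht⟩)) hf
  rwa [map_sum, Finset.sum_eq_single_of_mem (s, t) (mem_antidiagonal.mpr hst)
    fun st _ hne ↦ by rw [map_smul, coord_of_ne st.1 st.2 hne, smul_zero], map_smul, coord_self,
    map_zero, smul_eq_mul, mul_one] at hcoord

theorem gridDegree_le_weightSpace (p : ℕ) : gridDegree k b p ≤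
    weightSpace n q T ((q⁻¹ ^ 2) ^ p * (q⁻¹ ^ 2 * q ^ (d₁ + d₂))) ((-1) ^ p * ε) := by
  refine gridDegree_le_iff.mpr ?_
  rintro s t rfl
  exact hb.mem_weightSpace s t

theorem E_pow_smul_mem_gridDegree {p : ℕ} {x : T} (hx : x ∈ gridDegree k b p) (s : ℕ) :
    E k n q ^ s • x ∈ gridDegree k b (p + s) := by
  have hE (p : ℕ) : gridDegree k b p ≤
      (gridDegree k b (p + 1)).comap (Algebra.lsmul k k T (E k n q)) := by
    refine gridDegree_le_iff.mpr ?_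
    rintro s t rfl
    obtain ⟨x, y, hxy⟩ := hb.E_smul s t
    change E k n q • b s t ∈ gridDegree k b (s + t + 1)
    rw [hxy]
    exact Submodule.add_mem _ (Submodule.smul_mem _ _ (mem_gridDegree (by lia)))
      (Submodule.smul_mem _ _ (mem_gridDegree (by lia)))
  induction s with
  | zero => rwa [pow_zero, one_smul]
  | succ s ih =>
    rw [pow_succ', mul_smul]
    exact hE (p + s) ih

theorem exists_F_smul_sum_antidiagonal (h : Admissible n q) : ∃ x y : ℕ × ℕ → k,
    (∀ s, s ≠ 0 → s < d₁ → ∀ t, x (s, t) ≠ 0) ∧ (∀ t, x (d₁, t) = 0) ∧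
    (∀ t, t ≠ 0 → t < d₂ → ∀ s, y (s, t) ≠ 0) ∧
    ∀ (f : ℕ × ℕ → k) (p : ℕ),
      F k n q • ∑ st ∈ antidiagonal (p + 1), f st • b st.1 st.2 =
        ∑ st ∈ antidiagonal p, (f (st.1 + 1, st.2) * x (st.1 + 1, st.2) +
          f (st.1, st.2 + 1) * y (st.1, st.2 + 1)) • b st.1 st.2 := by
  choose x hx y hy hF using hb.F_smul
  have hle := hb.add_le
  refine ⟨fun st ↦ x st.1 st.2 * lowerCoeff q d₁ st.1, fun st ↦ y st.1 st.2 * lowerCoeff q d₂ st.2,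
    fun s hs hsd t ↦ mul_ne_zero (hx s t) (h.lowerCoeff_ne_zero hs (by lia) (by lia) hsd.ne),
    fun t ↦ mul_eq_zero_of_right _ (h.lowerCoeff_self d₁),
    fun t ht htd s ↦ mul_ne_zero (hy s t) (h.lowerCoeff_ne_zero ht (by lia) (by lia) htd.ne),
    fun f p ↦ ?_⟩
  simp only [Finset.smul_sum, smul_comm (F k n q) (_ : k), hF, smul_add, smul_smul, add_smul,
    Finset.sum_add_distrib]
  rw [Finset.Nat.sum_antidiagonal_succ, Finset.Nat.sum_antidiagonal_succ']
  simp only [lowerCoeff_zero, mul_zero, zero_smul, zero_add, Nat.add_sub_cancel]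

theorem eq_zero_of_F_smul_eq_zero (h : Admissible n q) {p : ℕ} (hp : d₁ ≤ p) {x : T}
    (hx : x ∈ gridDegree k b p) (hF : F k n q • x = 0) : x = 0 := by
  obtain ⟨f, rfl⟩ := exists_eq_sum_antidiagonal hx
  obtain ⟨x, y, -, hx_top, hy, hFsum⟩ := hb.exists_F_smul_sum_antidiagonal h
  have descend (s t : ℕ) (hst : s + (t + 1) = p) (hs : s < d₁) (ht : t + 1 < d₂)
      (hzero : f (s + 1, t) * x (s + 1, t) = 0) : f (s, t + 1) = 0 := by
    obtain rfl : s + t + 1 = p := hst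
    rw [hFsum] at hF
    have hcoeff := hb.coeff_eq_zero_of_sum_antidiagonal_eq_zero hF rfl hs (by lia)
    rw [hzero, zero_add] at hcoeff
    exact (mul_eq_zero.mp hcoeff).resolve_right (hy _ (by lia) ht s)
  have hf (m : ℕ) : ∀ s t, s + 1 + m = d₁ → t < d₂ → s + t = p → f (s, t) = 0 := by
    induction m with
    | zero =>
      rintro s t rfl ht hst
      obtain ⟨t, rfl⟩ := Nat.exists_eq_succ_of_ne_zero (by lia : t ≠ 0)
      exact descend s t hst (by lia) ht (mul_eq_zero_of_right _ (hx_top t))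
    | succ m ih =>
      intro s t hs ht hst
      obtain ⟨t, rfl⟩ := Nat.exists_eq_succ_of_ne_zero (by lia : t ≠ 0)
      exact descend s t hst (by lia) ht
        (mul_eq_zero_of_left (ih (s + 1) t (by lia) (by lia) (by lia)) _)
  refine Finset.sum_eq_zero fun st hst ↦ ?_
  rw [mem_antidiagonal] at hst
  by_cases hout : d₁ ≤ st.1 ∨ d₂ ≤ st.2
  · rw [hb.eq_zero hout, smul_zero]
  · rw [hf (d₁ - 1 - st.1) st.1 st.2 (by lia) (by lia) hst, zero_smul]

theorem exists_F_smul_eq_zero (h : Admissible n q) {m : ℕ} (hm₁ : m < d₁) (hm₂ : m < d₂) :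
    ∃ w ∈ gridDegree k b m, w ≠ 0 ∧ F k n q • w = 0 := by
  obtain ⟨x, y, hx, -, -, hFsum⟩ := hb.exists_F_smul_sum_antidiagonal h
  let g : ℕ → ℕ → k := Nat.rec (fun _ ↦ 1) fun s gs t ↦ -(gs (t + 1) * y (s, t + 1)) / x (s + 1, t)
  refine ⟨∑ st ∈ antidiagonal m, g st.1 st.2 • b st.1 st.2, ?_, fun hw ↦ ?_, ?_⟩
  · exact Submodule.sum_mem _ fun st hst ↦
      Submodule.smul_mem _ _ (mem_gridDegree (mem_antidiagonal.mp hst))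
  · exact one_ne_zero (hb.coeff_eq_zero_of_sum_antidiagonal_eq_zero (f := fun st ↦ g st.1 st.2) hw
      (zero_add m) (by lia) hm₂)
  · cases m with
    | zero =>
      obtain ⟨x, -, y, -, hF⟩ := hb.F_smul 0 0
      rw [Finset.Nat.antidiagonal_zero, Finset.sum_singleton, smul_comm, hF, lowerCoeff_zero,
        lowerCoeff_zero, mul_zero, mul_zero, zero_smul, add_zero, smul_zero]
    | succ m =>
      rw [hFsum fun st ↦ g st.1 st.2]
      refine Finset.sum_eq_zero fun st hst ↦ ?_
      rw [mem_antidiagonal] at hst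
      rw [div_mul_cancel₀ _ (hx (st.1 + 1) (by lia) (by lia) st.2), neg_add_cancel, zero_smul]

theorem exists_isLowest (h : Admissible n q) {m : ℕ} (hm₁ : m < d₁) (hm₂ : m < d₂) :
    ∃ w : T, IsLowest n q (d₁ + d₂ - 1 - 2 * m) ((-1) ^ m * ε) w ∧ w ≠ 0 ∧
      E k n q ^ (d₁ + d₂ - 1 - 2 * m) • w = 0 := by
  obtain ⟨w, hw, hw0, hF⟩ := hb.exists_F_smul_eq_zero h hm₁ hm₂
  have weight_eq : (q⁻¹ ^ 2) ^ m * (q⁻¹ ^ 2 * q ^ (d₁ + d₂)) =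
      q⁻¹ * q ^ (d₁ + d₂ - 1 - 2 * m) := by
    obtain ⟨c, hc⟩ : ∃ c, d₁ + d₂ = 2 * m + 1 + c := ⟨d₁ + d₂ - (2 * m + 1), by lia⟩
    rw [hc, Nat.sub_sub, add_comm 1, Nat.add_sub_cancel_left, ← pow_mul, inv_pow, inv_pow]
    field_simp [h.ne_zero]
    ring
  have hlow : IsLowest n q (d₁ + d₂ - 1 - 2 * m) ((-1) ^ m * ε) w :=
    ⟨hF, weight_eq ▸ hb.gridDegree_le_weightSpace m hw⟩
  refine ⟨w, hlow, hw0,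
    hb.eq_zero_of_F_smul_eq_zero h (by lia) (hb.E_pow_smul_mem_gridDegree hw _) ?_⟩
  rw [hlow.F_smul_E_pow_smul h, h.lowerCoeff_self, zero_smul]

end StringGrid

theorem sum_range_string_dims {d₁ d₂ r : ℕ} (h₁ : r ≤ d₁) (h₂ : r ≤ d₂) :
    ∑ m ∈ Finset.range r, (d₁ + d₂ - 1 - 2 * m) = r * (d₁ + d₂ - r) := by
  induction r with
  | zero => simp
  | succ r ih =>
    rw [Finset.sum_range_succ, ih (by lia) (by lia)]
    obtain ⟨a, ha⟩ : ∃ a, d₁ + d₂ = r + r + 2 + a := ⟨d₁ + d₂ - (r + r + 2), by lia⟩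
    rw [ha, (by lia : r + r + 2 + a - r = r + 2 + a), (by lia : r + r + 2 + a - 1 - 2 * r = a + 1),
      (by lia : r + r + 2 + a - (r + 1) = r + 1 + a)]
    ring

open DirectSum in
theorem StringGrid.nonempty_linearEquiv_directSum (h : Admissible n q)
    (hb : StringGrid n q d₁ d₂ ε b) {ι : Type*} (e : ι ≃ Fin (min d₁ d₂))
    {Z : ι → Type*} [∀ l, AddCommGroup (Z l)] [∀ l, Module k (Z l)] [∀ l, Module (U k n q) (Z l)]
    [∀ l, IsScalarTower k (U k n q) (Z l)]
    (hZ : ∀ l, ∃ v : Z l, IsLowestString n q (d₁ + d₂ - 1 - 2 * e l) ((-1) ^ (e l : ℕ) * ε) v ∧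
      powSpan k (E k n q) v = ⊤) :
    Nonempty (T ≃ₗ[U k n q] ⨁ l, Z l) := by
  obtain ⟨B, -⟩ := hb.exists_basis
  have : Fintype ι := .ofEquiv _ e.symm
  have : Module.Finite k T := .of_basis B
  have hlt (l : ι) : (e l : ℕ) < d₁ ∧ (e l : ℕ) < d₂ := lt_min_iff.mp (e l).2
  choose w hw hw0 hE using fun l ↦ hb.exists_isLowest h (hlt l).1 (hlt l).2
  refine QFL.nonempty_linearEquiv_directSum h (fun l l' hll' ↦ e.injective (Fin.ext ?_)) hZ hw hw0
    hE ?_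
  · have := hlt l
    have := hlt l'
    lia
  · rw [Module.finrank_eq_card_basis B, Fintype.card_prod, Fintype.card_fin, Fintype.card_fin,
      e.sum_comp fun m ↦ d₁ + d₂ - 1 - 2 * (m : ℕ),
      Fin.sum_univ_eq_sum_range fun m ↦ d₁ + d₂ - 1 - 2 * m,
      sum_range_string_dims (min_le_left _ _) (min_le_right _ _), ← min_add_max d₁ d₂,
      Nat.add_sub_cancel_left, min_mul_max]

end StringGrid

/-! ### The comultiplication on tensor products of weight vectors -/

section Eigenvectors

variable {k A X : Type*} [Field k] [Ring A] [AddCommGroup X] [Module k X] [Module A X] {g : A}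
  {l : k} {v : X}

theorem exists_ne_zero_smul_eq_of_isUnit (hg : IsUnit g) (hv : g • v = l • v) :
    ∃ c : k, c ≠ 0 ∧ g • v = c • v := by
  rcases eq_or_ne l 0 with rfl | hl
  · rw [zero_smul, hg.smul_eq_zero] at hv
    exact ⟨1, one_ne_zero, by rw [hv, smul_zero, smul_zero]⟩
  · exact ⟨l, hl, hv⟩

variable [Algebra k A] [IsScalarTower k A X]

theorem exists_inverse_smul_eq (hv : g • v = l • v) : ∃ c : k, Ring.inverse g • v = c • v := by
  by_cases hg : IsUnit g
  · obtain ⟨c, hc, hv⟩ := exists_ne_zero_smul_eq_of_isUnit hg hv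
    refine ⟨c⁻¹, hg.smul_left_cancel.mp ?_⟩
    rw [← mul_smul, Ring.mul_inverse_cancel _ hg, one_smul, smul_comm, hv, inv_smul_smul₀ hc]
  · exact ⟨0, by rw [Ring.inverse_non_unit _ hg, zero_smul, zero_smul]⟩

end Eigenvectors

section

variable {k : Type} [Field k] {n : ℕ} {q : k}

theorem oneIdem_eq_spectralIdem (hq : (q ^ n) ^ n = 1) (hn : n ≠ 0) {r : ℕ} (hr : r ≤ n) :
    oneIdem k n q r = spectralIdem (q ^ n) n (K k n q) r := by
  have hζ : q ^ n ≠ 0 := fun h0 ↦ by simp [h0, hn] at hq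
  have hpow : (q ^ n) ^ (n - r) = (q ^ n)⁻¹ ^ r := by rw [pow_sub₀ _ hζ hr, hq, one_mul, inv_pow]
  simp only [oneIdem, spectralIdem, pow_mul _ (n - r), hpow, smul_pow]

variable {Y : Type*} [AddCommGroup Y] [Module k Y] [Module (U k n q) Y]
  [IsScalarTower k (U k n q) Y]

namespace Admissible

variable (h : Admissible n q) {y : Y}
include h

theorem exists_K_smul_eq {l ε : k} (hy : y ∈ weightSpace n q Y l ε) :
    ∃ r < n, K k n q • y = (q ^ n) ^ r • y := by
  rcases eq_or_ne y 0 with rfl | hy0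
  · exact ⟨0, h.pos, by rw [smul_zero, smul_zero]⟩
  · have hK := h.K_smul_of_mem_weightSpace hy
    have hpow := pow_smul_of_smul hK n
    rw [K_pow_n, one_smul] at hpow
    have : NeZero n := ⟨h.pos.ne'⟩
    obtain ⟨r, hr, heq⟩ := h.primitive_pow.eq_pow_of_pow_eq_one
      (smul_left_injective k hy0 (hpow.symm.trans (one_smul k y).symm))
    exact ⟨r, hr, heq ▸ hK⟩

variable {r : ℕ} (hK : K k n q • y = (q ^ n) ^ r • y) (hr : r < n)
include hK hr

theorem oneIdem_smul_self : oneIdem k n q r • y = y := by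
  rw [oneIdem_eq_spectralIdem h.primitive_pow.pow_eq_one h.pos.ne' hr.le,
    spectralIdem_smul_self (pow_ne_zero n h.ne_zero) h.natCast_ne_zero hK]

theorem oneIdem_smul_of_ne {i : ℕ} (hi : i < n) (hir : i ≠ r) : oneIdem k n q i • y = 0 := by
  rw [oneIdem_eq_spectralIdem h.primitive_pow.pow_eq_one h.pos.ne' hi.le,
    spectralIdem_smul_of_ne h.primitive_pow hi hr hir hK]

theorem flat_smul : flat k n q • y = q⁻¹ ^ r • y := by
  rw [flat, Finset.sum_smul, Finset.sum_eq_single_of_mem r (Finset.mem_range.mpr hr)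
    fun i hi hir ↦ by
      rw [smul_assoc, h.oneIdem_smul_of_ne hK hr (Finset.mem_range.mp hi) hir, smul_zero],
    smul_assoc, h.oneIdem_smul_self hK hr]

theorem sum_oneIdem_smul (hr0 : r ≠ 0) :
    (∑ i ∈ Finset.Icc 1 (n - 1), oneIdem k n q i) • y = y := by
  rw [Finset.sum_smul, Finset.sum_eq_single_of_mem r (Finset.mem_Icc.mpr (by lia))
    fun i hi hir ↦ h.oneIdem_smul_of_ne hK hr (by rw [Finset.mem_Icc] at hi; lia) hir,
    h.oneIdem_smul_self hK hr]

omit hr in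
theorem sum_oneIdem_smul_of_eq_zero (hr0 : r = 0) :
    (∑ i ∈ Finset.Icc 1 (n - 1), oneIdem k n q i) • y = 0 := by
  subst hr0
  rw [Finset.sum_smul]
  refine Finset.sum_eq_zero fun i hi ↦ ?_
  rw [Finset.mem_Icc] at hi
  exact h.oneIdem_smul_of_ne hK h.pos (by lia) (by lia)

end Admissible

end

section TensorRep

variable {k : Type} [Field k] {n : ℕ} {q : k} {Δ : U k n q →ₐ[k] U k n q ⊗[k] U k n q}

/-- The tensor product `X ⊗ Y` as a representation of `u` through `Δ`, i.e. with the action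
`tensorModule`. It is a type synonym because `X ⊗ Y` already carries the action of `u` on the first
factor. -/
def TensorRep (_Δ : U k n q →ₐ[k] U k n q ⊗[k] U k n q) (X Y : Type) [AddCommGroup X] [Module k X]
    [AddCommGroup Y] [Module k Y] : Type :=
  X ⊗[k] Y

variable {X Y : Type} [AddCommGroup X] [Module k X] [Module (U k n q) X]
  [IsScalarTower k (U k n q) X] [SMulCommClass (U k n q) k X] [AddCommGroup Y] [Module k Y]
  [Module (U k n q) Y] [IsScalarTower k (U k n q) Y] [SMulCommClass (U k n q) k Y]

namespace TensorRep

instance : AddCommGroup (TensorRep Δ X Y) := inferInstanceAs (AddCommGroup (X ⊗[k] Y))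

instance : Module k (TensorRep Δ X Y) := inferInstanceAs (Module k (X ⊗[k] Y))

instance : Module (U k n q) (TensorRep Δ X Y) := tensorModule k n q Δ X Y

variable (Δ) in
/-- The pure tensors of `TensorRep Δ X Y`, as a bilinear map. -/
def tmul : X →ₗ[k] Y →ₗ[k] TensorRep Δ X Y := TensorProduct.mk k X Y

variable (Δ X Y) in
/-- The action of `u ⊗ u` on `X ⊗ Y`; composed with `Δ` it is the action of `tensorModule`. -/
def tensorEnd : (U k n q ⊗[k] U k n q) →ₐ[k] Module.End k (TensorRep Δ X Y) :=
  (Module.endTensorEndAlgHom (R := k) (S := k) (A := k) (M := X) (N := Y)).comp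
    (Algebra.TensorProduct.map (Algebra.lsmul k k X) (Algebra.lsmul k k Y))

theorem tensorEnd_tmul (a b : U k n q) (x : X) (y : Y) :
    tensorEnd Δ X Y (a ⊗ₜ b) (tmul Δ x y) = tmul Δ (a • x) (b • y) := rfl

theorem smul_eq_tensorEnd (u : U k n q) (t : TensorRep Δ X Y) :
    u • t = tensorEnd Δ X Y (Δ u) t := rfl

instance : IsScalarTower k (U k n q) (TensorRep Δ X Y) where
  smul_assoc c u t := by
    rw [smul_eq_tensorEnd, map_smul, map_smul, LinearMap.smul_apply, ← smul_eq_tensorEnd]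

end TensorRep

open TensorRep

namespace IsComul

variable (hΔ : IsComul k n q Δ)
include hΔ

theorem map_weightElt : Δ (weightElt k n q) = weightElt k n q ⊗ₜ weightElt k n q := by
  rw [weightElt, Kinv, map_mul, map_pow, hΔ.1, hΔ.2.1, Algebra.TensorProduct.tmul_pow,
    Algebra.TensorProduct.tmul_mul_tmul]

theorem map_signElt : Δ (signElt k n q) = signElt k n q ⊗ₜ signElt k n q := by
  rw [signElt, map_mul, map_pow, hΔ.1, hΔ.2.1, Algebra.TensorProduct.tmul_pow,
    Algebra.TensorProduct.tmul_mul_tmul]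

variable {x : X} {y : Y} {l₁ ε₁ l₂ ε₂ : k} (hx : x ∈ weightSpace n q X l₁ ε₁)
  (hy : y ∈ weightSpace n q Y l₂ ε₂)
include hx hy

theorem tmul_mem_weightSpace :
    tmul Δ x y ∈ weightSpace n q (TensorRep Δ X Y) (l₁ * l₂) (ε₁ * ε₂) := by
  rw [mem_weightSpace] at hx hy ⊢
  rw [smul_eq_tensorEnd, smul_eq_tensorEnd, hΔ.map_weightElt, hΔ.map_signElt, tensorEnd_tmul,
    tensorEnd_tmul, hx.1, hx.2, hy.1, hy.2, LinearMap.map_smul₂, LinearMap.map_smul₂, map_smul,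
    map_smul, smul_smul, smul_smul]
  exact ⟨rfl, rfl⟩

variable (h : Admissible n q)
include h

theorem exists_F_smul_tmul : ∃ a ≠ (0 : k), ∃ c ≠ (0 : k),
    F k n q • tmul Δ x y = a • tmul Δ (F k n q • x) y + c • tmul Δ x (F k n q • y) := by
  obtain ⟨r, hr, hK⟩ := h.exists_K_smul_eq hy
  have weightElt_unit : IsUnit (weightElt k n q) :=
    .of_pow_eq_one h.weightElt_pow_half h.half_sq_ne_zero
  have Kh_unit : IsUnit (Kh k n q) := .of_pow_eq_one Kh_pow_sq (pow_ne_zero 2 h.pos.ne')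
  obtain ⟨c, hc, hxc⟩ :=
    exists_ne_zero_smul_eq_of_isUnit weightElt_unit (mem_weightSpace.mp hx).1
  obtain ⟨c', hc', hxc'⟩ :=
    exists_ne_zero_smul_eq_of_isUnit Kh_unit (h.Kh_smul_of_mem_weightSpace hx)
  rw [smul_eq_tensorEnd, hΔ.2.2.2, ← weightElt, map_add, map_add, LinearMap.add_apply,
    LinearMap.add_apply, tensorEnd_tmul, tensorEnd_tmul, tensorEnd_tmul, mul_smul, mul_smul,
    h.flat_smul hK hr, map_smul, hxc, hxc', LinearMap.map_smul₂, LinearMap.map_smul₂]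
  refine ⟨q⁻¹ ^ r, pow_ne_zero r (inv_ne_zero h.ne_zero), ?_⟩
  rcases eq_or_ne r 0 with rfl | hr0
  · refine ⟨c', hc', ?_⟩
    rw [h.sum_oneIdem_smul_of_eq_zero hK rfl, h.oneIdem_smul_self hK hr, smul_zero, map_zero,
      smul_zero, add_zero]
  · refine ⟨c, hc, ?_⟩
    rw [h.sum_oneIdem_smul hK hr hr0, h.oneIdem_smul_of_ne hK hr h.pos hr0.symm, smul_zero,
      map_zero, smul_zero, add_zero]

theorem exists_E_smul_tmul : ∃ a c : k,
    E k n q • tmul Δ x y = a • tmul Δ (E k n q • x) y + c • tmul Δ x (E k n q • y) := by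
  obtain ⟨r, hr, hK⟩ := h.exists_K_smul_eq hy
  obtain ⟨a, ha⟩ := exists_inverse_smul_eq (h.flat_smul hK hr)
  have hEy := h.E_pow_smul_mem_weightSpace hy 1
  simp only [pow_one (E k n q)] at hEy
  obtain ⟨r', hr', hK'⟩ := h.exists_K_smul_eq hEy
  rw [smul_eq_tensorEnd, hΔ.2.2.1, map_add, map_add, LinearMap.add_apply, LinearMap.add_apply,
    tensorEnd_tmul, tensorEnd_tmul, tensorEnd_tmul, mul_smul, mul_smul, ha, one_smul, map_smul,
    Kinv, pow_smul_of_smul (h.K_smul_of_mem_weightSpace hx), LinearMap.map_smul₂]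
  rcases eq_or_ne r' 0 with rfl | hr0
  · refine ⟨a, (l₁ ^ (n ^ 2 / 4 - n / 2) * ε₁) ^ (n - 1), ?_⟩
    rw [h.sum_oneIdem_smul_of_eq_zero hK' rfl, h.oneIdem_smul_self hK' hr', map_zero, add_zero]
  · refine ⟨a, 1, ?_⟩
    rw [h.sum_oneIdem_smul hK' hr' hr0, h.oneIdem_smul_of_ne hK' hr' h.pos hr0.symm, map_zero,
      smul_zero, add_zero, one_smul]

omit hx hy in
theorem stringGrid {d₁ d₂ : ℕ} {v₁ : X} {v₂ : Y} (hv₁ : IsLowestString n q d₁ ε₁ v₁)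
    (htop₁ : powSpan k (E k n q) v₁ = ⊤) (hv₂ : IsLowestString n q d₂ ε₂ v₂)
    (htop₂ : powSpan k (E k n q) v₂ = ⊤) (hd : d₁ + d₂ ≤ n ^ 2) :
    StringGrid n q d₁ d₂ (ε₁ * ε₂) fun s t ↦ tmul Δ (E k n q ^ s • v₁) (E k n q ^ t • v₂) := by
  have weight₁ := hv₁.E_pow_smul_mem_weightSpace h
  have weight₂ := hv₂.E_pow_smul_mem_weightSpace h
  refine ⟨hd, ?_, ?_, fun s t ↦ ?_, fun s t ↦ ?_, fun s t ↦ ?_⟩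
  · rintro s t (hs | ht)
    · rw [pow_smul_eq_zero_of_le hv₁.E_pow_smul hs, map_zero, LinearMap.zero_apply]
    · rw [pow_smul_eq_zero_of_le hv₂.E_pow_smul ht, map_zero]
  · obtain ⟨b₁, hb₁⟩ := exists_basis_pow_smul hv₁.E_pow_smul hv₁.E_pow_pred_smul htop₁
    obtain ⟨b₂, hb₂⟩ := exists_basis_pow_smul hv₂.E_pow_smul hv₂.E_pow_pred_smul htop₂
    refine ⟨b₁.tensorProduct b₂, fun s t ↦ ?_⟩
    rw [← hb₁, ← hb₂]
    exact Module.Basis.tensorProduct_apply b₁ b₂ s t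
  · convert hΔ.tmul_mem_weightSpace (weight₁ s) (weight₂ t) using 2 <;> ring
  · obtain ⟨a, c, hE⟩ := hΔ.exists_E_smul_tmul (weight₁ s) (weight₂ t) h
    refine ⟨a, c, hE.trans ?_⟩
    rw [← mul_smul, ← pow_succ', ← mul_smul, ← pow_succ']
  · obtain ⟨a, ha, c, hc, hF⟩ := hΔ.exists_F_smul_tmul (weight₁ s) (weight₂ t) h
    refine ⟨a, ha, c, hc, hF.trans ?_⟩
    rw [hv₁.F_smul_E_pow_smul h, hv₂.F_smul_E_pow_smul h, LinearMap.map_smul₂,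
      map_smul _ (lowerCoeff q d₂ t), smul_smul, smul_smul]

end IsComul

end TensorRep

open DirectSum in
theorem IsComul.nonempty_tensorRep_S_linearEquiv {k : Type} [Field k] {n : ℕ} {q : k}
    {Δ : U k n q →ₐ[k] U k n q ⊗[k] U k n q} (hΔ : IsComul k n q Δ) (h : Admissible n q)
    {i₁ i₂ j₁ j₂ : ℕ} (hi₁ : i₁ ≤ n ^ 2 / 2) (hi₂ : i₂ ≤ n ^ 2 / 2) (hj₁ : j₁ ≤ 1) (hj₂ : j₂ ≤ 1)
    (hi : n ^ 2 - 2 * i₂ + 1 ≤ 2 * i₁ - 1) {r c : ℕ} (hr : r = n ^ 2 - 2 * max i₁ i₂ + 1)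
    (hc : c = n ^ 2 / 2 + min i₁ i₂ - max i₁ i₂) :
    Nonempty (TensorRep Δ (S k n q i₁ j₁) (S k n q i₂ j₂) ≃ₗ[U k n q]
      ⨁ l : Fin r, S k n q (c - l) ((j₁ + j₂ + l) % 2)) := by
  have htwo := h.two_dvd_sq
  obtain ⟨v₁, hv₁, htop₁⟩ := h.exists_isLowestString_S (by lia) hi₁ hj₁
  obtain ⟨v₂, hv₂, htop₂⟩ := h.exists_isLowestString_S (by lia) hi₂ hj₂
  have hmin : r = min (n ^ 2 - 2 * i₁ + 1) (n ^ 2 - 2 * i₂ + 1) := by lia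
  refine (hΔ.stringGrid h hv₁ htop₁ hv₂ htop₂ (by lia)).nonempty_linearEquiv_directSum h
    (Fin.revPerm.trans (finCongr hmin))
    (Z := fun l : Fin r ↦ S k n q (c - l) ((j₁ + j₂ + l) % 2)) fun l ↦ ?_
  have hl := l.2
  obtain ⟨v, hv, htop⟩ := h.exists_isLowestString_S (i := c - l) (j := (j₁ + j₂ + l) % 2)
    (by lia) (by lia) (by lia)
  refine ⟨v, ?_, htop⟩
  convert hv using 1
  · simp only [Equiv.trans_apply, Fin.revPerm_apply, finCongr_apply, Fin.val_cast, Fin.val_rev]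
    lia
  · rw [← pow_add, ← pow_add, neg_one_pow_eq_pow_mod_two]
    congr 1
    simp only [Equiv.trans_apply, Fin.revPerm_apply, finCongr_apply, Fin.val_cast, Fin.val_rev]
    lia

end QFL

open QFL DirectSum in
theorem statement18_general {k : Type} [Field k] {n : ℕ} {q : k} (h : Admissible n q)
    {Δ : U k n q →ₐ[k] (U k n q ⊗[k] U k n q)} (hΔ : IsComul k n q Δ) {i₁ i₂ j₁ j₂ : ℕ}
    (hi₁ : i₁ ≤ n ^ 2 / 2) (hi₂ : i₂ ≤ n ^ 2 / 2) (hj₁ : j₁ ≤ 1) (hj₂ : j₂ ≤ 1)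
    (hi : n ^ 2 - 2 * i₂ + 1 ≤ 2 * i₁ - 1) :
    letI := tensorModule k n q Δ (S k n q i₁ j₁) (S k n q i₂ j₂)
    (i₁ ≤ i₂ →
      Nonempty (((S k n q i₁ j₁) ⊗[k] (S k n q i₂ j₂)) ≃ₗ[U k n q]
        (⨁ l : Fin (n ^ 2 - 2 * i₂ + 1),
          (S k n q (n ^ 2 / 2 + i₁ - i₂ - l) ((j₁ + j₂ + l) % 2))))) ∧
    (i₂ < i₁ →
      Nonempty (((S k n q i₁ j₁) ⊗[k] (S k n q i₂ j₂)) ≃ₗ[U k n q]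
        (⨁ l : Fin (n ^ 2 - 2 * i₁ + 1),
          (S k n q (n ^ 2 / 2 - i₁ + i₂ - l) ((j₁ + j₂ + l) % 2))))) :=
  ⟨fun _ ↦ hΔ.nonempty_tensorRep_S_linearEquiv h hi₁ hi₂ hj₁ hj₂ hi (by lia) (by lia),
    fun _ ↦ hΔ.nonempty_tensorRep_S_linearEquiv h hi₁ hi₂ hj₁ hj₂ hi (by lia) (by lia)⟩

open QFL DirectSum in
/-- Lemma 4.4 / Theorem 4.8 (a), (b): decomposition of `S_{2i₁,j₁} ⊗ S_{2i₂,j₂}` into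
simples when `2i₁-1 ≥ n²-2i₂+1`. -/
theorem statement18 (k : Type) [Field k] [IsAlgClosed k] [CharZero k]
    (n : ℕ) (hn : 0 < n) (h4 : 4 ∣ n) (q : k) (hq : IsPrimitiveRoot q (n ^ 2))
    (Δ : U k n q →ₐ[k] (U k n q ⊗[k] U k n q)) (hΔ : IsComul k n q Δ) :
    ∀ i₁ i₂ j₁ j₂ : ℕ, 1 ≤ i₁ → i₁ ≤ n ^ 2 / 2 → 1 ≤ i₂ → i₂ ≤ n ^ 2 / 2 →
      j₁ ≤ 1 → j₂ ≤ 1 → n ^ 2 - 2 * i₂ + 1 ≤ 2 * i₁ - 1 →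
      letI := tensorModule k n q Δ (S k n q i₁ j₁) (S k n q i₂ j₂)
      (i₁ ≤ i₂ →
        Nonempty (((S k n q i₁ j₁) ⊗[k] (S k n q i₂ j₂)) ≃ₗ[U k n q]
          (⨁ l : Fin (n ^ 2 - 2 * i₂ + 1),
            (S k n q (n ^ 2 / 2 + i₁ - i₂ - l) ((j₁ + j₂ + l) % 2))))) ∧
      (i₂ < i₁ →
        Nonempty (((S k n q i₁ j₁) ⊗[k] (S k n q i₂ j₂)) ≃ₗ[U k n q]
          (⨁ l : Fin (n ^ 2 - 2 * i₁ + 1),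
            (S k n q (n ^ 2 / 2 - i₁ + i₂ - l) ((j₁ + j₂ + l) % 2))))) :=
  fun _ _ _ _ _ hi₁ _ hi₂ hj₁ hj₂ hi ↦
    statement18_general ⟨hn, h4, hq⟩ hΔ hi₁ hi₂ hj₁ hj₂ hi
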